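/- There exists a nonempty Π⁰₁ closed subset Q ⊆ ℝ² such that Q is a dendroid and Q contains no computable point. -/

import Mathlib

open Set Metric

section TopDefs

variable {α : Type*} [TopologicalSpace α]

/-- `A ⊆ α` is an arc with endpoints `x` and `y`:
a homeomorphic (continuous injective) image of `[0,1]` sending `0 ↦ x`, `1 ↦ y`. -/
def IsArc (A : Set α) (x y : α) : Prop :=
  ∃ f : Set.Icc (0:ℝ) 1 → α, Continuous f ∧ Function.Injective f ∧
    Set.range f = A ∧ f ⟨0, by norm_num⟩ = x ∧ f ⟨1, by norm_num⟩ = y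

/-- A continuum: a nonempty compact connected set. -/
def IsContinuum (X : Set α) : Prop := IsCompact X ∧ IsConnected X

/-- Any two distinct points of `X` are endpoints of an arc contained in `X`. -/
def ArcwiseConnectedSet (X : Set α) : Prop :=
  ∀ x ∈ X, ∀ y ∈ X, x ≠ y → ∃ A, A ⊆ X ∧ IsArc A x y

/-- `X` is unicoherent: for all closed connected `A, B ⊆ X` with `A ∪ B = X`,
the intersection `A ∩ B` is connected. -/
def UnicoherentSet (X : Set α) : Prop :=
  ∀ A B : Set α, A ⊆ X → B ⊆ X → IsClosed A → IsClosed B →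
    IsConnected A → IsConnected B → A ∪ B = X → IsConnected (A ∩ B)

/-- Every subcontinuum of `X` is unicoherent. -/
def HereditarilyUnicoherent (X : Set α) : Prop :=
  ∀ Y, Y ⊆ X → IsContinuum Y → UnicoherentSet Y

/-- A dendroid: an arcwise connected, hereditarily unicoherent continuum. -/
def IsDendroid (X : Set α) : Prop :=
  IsContinuum X ∧ ArcwiseConnectedSet X ∧ HereditarilyUnicoherent X

/-- The unit circle `S¹`. -/
def unitCircle : Set (EuclideanSpace ℝ (Fin 2)) := Metric.sphere 0 1

/-- A dendrite: a locally connected continuum containing no subset homeomorphic to `S¹`. -/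
def IsDendrite (X : Set α) : Prop :=
  IsContinuum X ∧ LocallyConnectedSpace ↥X ∧
    ∀ S : Set α, S ⊆ X → IsEmpty (↥S ≃ₜ ↥unitCircle)

/-- `x` and `y` lie in the same arc-component of `Y`. -/
def SameArcComponent (Y : Set α) (x y : α) : Prop :=
  x = y ∨ ∃ A, A ⊆ Y ∧ IsArc A x y

/-- `x` is a ramification point of `X`: `X \ {x}` has at least three arc-components. -/
def IsRamificationPoint (X : Set α) (x : α) : Prop :=
  x ∈ X ∧ ∃ u v w, u ∈ X \ {x} ∧ v ∈ X \ {x} ∧ w ∈ X \ {x} ∧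
    ¬ SameArcComponent (X \ {x}) u v ∧ ¬ SameArcComponent (X \ {x}) u w ∧
    ¬ SameArcComponent (X \ {x}) v w

/-- A tree (as a continuum): a dendrite with finitely many ramification points. -/
def IsTreeContinuum (X : Set α) : Prop :=
  IsDendrite X ∧ {x | IsRamificationPoint X x}.Finite

end TopDefs

section CompDefs

/-- The rational open ball in `ℝ²` coded by `((q₁, q₂), r)`. -/
def ballOfCode (c : (ℚ × ℚ) × ℚ) : Set (ℝ × ℝ) :=
  {x | dist x (((c.1.1 : ℝ), (c.1.2 : ℝ)) : ℝ × ℝ) < (c.2 : ℝ)}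

/-- A closed set `F ⊆ ℝ²` is `Π⁰₁` if it is the complement of the union of the rational
open balls coded by some c.e. set of codes. -/
def IsPi01Closed (F : Set (ℝ × ℝ)) : Prop :=
  ∃ W : (ℚ × ℚ) × ℚ → Prop, REPred W ∧ F = Set.univ \ ⋃ c ∈ {c | W c}, ballOfCode c

/-- `F ⊆ ℝ²` is c.e. closed if the set of codes of rational open balls meeting `F` is c.e. -/
def IsCEClosed (F : Set (ℝ × ℝ)) : Prop :=
  REPred (fun c : (ℚ × ℚ) × ℚ => (F ∩ ballOfCode c).Nonempty)

/-- A computable closed subset of `ℝ²`: both `Π⁰₁` and c.e. closed. -/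
def IsComputableClosed (F : Set (ℝ × ℝ)) : Prop :=
  IsPi01Closed F ∧ IsCEClosed F

/-- A point of `ℝ²` is computable if the set of codes of rational open balls
containing it is c.e. -/
def IsComputablePoint (x : ℝ × ℝ) : Prop :=
  REPred (fun c : (ℚ × ℚ) × ℚ => x ∈ ballOfCode c)

end CompDefs

section PsiDefs

/-- A tree of binary strings: a set of finite binary strings closed under prefixes. -/
def IsTreeOfStrings (T : Set (List Bool)) : Prop :=
  ∀ σ ∈ T, ∀ τ : List Bool, τ <+: σ → τ ∈ T

/-- The point `ψ(σ) ∈ ℝ²` associated with the binary string `σ`. -/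
noncomputable def psiPt (σ : List Bool) : ℝ × ℝ :=
  ((3:ℝ) ^ (-(σ.length : ℤ)) / 2 +
      2 * ∑ i ∈ Finset.range σ.length,
        (if σ.getD i false then (3:ℝ) ^ (-((i : ℤ) + 1)) else 0),
    (2:ℝ) ^ (-(σ.length : ℤ)))

/-- The planar embedding `Ψ(T)` of a tree `T` of binary strings: the closure of the union
of the segments from `ψ(σ⁻)` to `ψ(σ)` over nonempty `σ ∈ T` (together with the points
`ψ(σ)`, `σ ∈ T`, which makes no difference except for the degenerate trees `∅`, `{⟨⟩}`). -/
noncomputable def PsiSet (T : Set (List Bool)) : Set (ℝ × ℝ) :=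
  closure (psiPt '' T ∪ ⋃ σ ∈ T, ⋃ (_ : σ ≠ []), segment ℝ (psiPt σ.dropLast) (psiPt σ))

end PsiDefs

/-!
The cone over a `Π⁰₁` set `P ⊆ [0, 1]` without computable elements is a `Π⁰₁` fan in the plane, a
dendroid. A computable point of the fan other than the apex would compute its slope, an element of
`P`; but the apex itself is computable.

To hide the apex, let `k` be an injective computable enumeration of a noncomputable set. At stage
`s`, a piecewise linear homeomorphism of the plane, supported near the origin inside a small cone
that the stage-`s` approximation of the fan still contains, moves a point of that cone to the
origin. Its support is the smaller the larger `k s` is, so the compositions `G s` of the first `s`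
pushes converge to a homeomorphism `Φ`, and `Q := Φ ⁻¹' fan` is a `Π⁰₁` dendroid, because `x ∈ Q`
means that `G s x` lies in the stage-`s` approximation for every `s`. Points of `Q` outside
`p := Φ⁻¹ 0` still compute an element of `P`, since near them the compositions are eventually
constant. Finally `‖G s p‖` is small precisely when no small number is enumerated by `k` from stage
`s` on, so a computable `p` would make `range k` computable.
-/

/-! ### Effective choice -/

section Choice

open Encodable Nat.Partrec

variable {α β : Type*} [Primcodable α] [Primcodable β]

theorem exists_code_of_rePred {p : α → Prop} (hp : REPred p) :
    ∃ c : Code, ∀ a, p a ↔ ∃ t, (c.evaln t (encode a)).isSome := by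
  obtain ⟨c, hc⟩ := Code.exists_code.1 hp
  refine ⟨c, fun a ↦ ?_⟩
  have hdom : p a ↔ (c.eval (encode a)).Dom := by
    rw [hc]
    simp [Part.assert]
  simp only [hdom, Part.dom_iff_mem, Code.evaln_complete, Option.isSome_iff_exists,
    Option.mem_def]
  exact exists_comm

theorem rePred_comp {p : β → Prop} (hp : REPred p) {f : α → β} (hf : Computable f) :
    REPred fun a ↦ p (f a) :=
  Partrec.comp hp hf

theorem computable_evaln {t n : α → ℕ} {c : α → Code} (ht : Computable t) (hc : Computable c)
    (hn : Computable n) : Computable fun a ↦ (c a).evaln (t a) (n a) :=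
  Code.primrec_evaln.to_comp.comp ((ht.pair hc).pair hn)

theorem exists_partrec_choice {P : α → β → Prop} (hP : REPred fun p : α × β ↦ P p.1 p.2) :
    ∃ ψ : α →. β, Partrec ψ ∧ (∀ a, (ψ a).Dom ↔ ∃ b, P a b) ∧ ∀ a, ∀ b ∈ ψ a, P a b := by
  obtain ⟨c, hc⟩ := exists_code_of_rePred hP
  let test (a : α) (n : ℕ) : Option β := (decode n.unpair.1 : Option β).bind fun b ↦
    (c.evaln n.unpair.2 (encode (a, b))).map fun _ ↦ b
  have mem_test {a n b} : b ∈ test a n → P a b := by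
    intro h
    obtain ⟨b', -, hb'⟩ := Option.mem_bind_iff.1 h
    obtain ⟨y, hy, rfl⟩ := Option.mem_map.1 hb'
    exact (hc (a, b')).2 ⟨_, Option.isSome_iff_exists.2 ⟨y, hy⟩⟩
  have test_computable : Computable₂ test := by
    have hn : Computable fun p : (α × ℕ) × β ↦ p.1.2.unpair.2 :=
      Computable.snd.comp (Computable.unpair.comp (Computable.snd.comp Computable.fst))
    have hab : Computable fun p : (α × ℕ) × β ↦ encode (p.1.1, p.2) :=
      Computable.encode.comp ((Computable.fst.comp Computable.fst).pair Computable.snd)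
    have hrun : Computable fun p : (α × ℕ) × β ↦ c.evaln p.1.2.unpair.2 (encode (p.1.1, p.2)) :=
      computable_evaln hn (Computable.const c) hab
    exact Computable.option_bind
      (Computable.decode.comp (Computable.fst.comp (Computable.unpair.comp Computable.snd)))
      (Computable.option_map hrun (Computable.snd.comp Computable.fst).to₂).to₂
  refine ⟨_, Partrec.rfindOpt test_computable, fun a ↦ ?_, fun a b hb ↦ ?_⟩
  · rw [Nat.rfindOpt_dom]
    refine ⟨fun ⟨n, b, hb⟩ ↦ ⟨b, mem_test hb⟩, fun ⟨b, hb⟩ ↦ ?_⟩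
    obtain ⟨t, ht⟩ := (hc (a, b)).1 hb
    obtain ⟨y, hy⟩ := Option.isSome_iff_exists.1 ht
    exact ⟨Nat.pair (encode b) t, b, by
      simp only [test, Nat.unpair_pair, encodek, Option.bind_some, hy, Option.map_some,
        Option.mem_def]⟩
  · exact (Nat.rfindOpt_spec hb).elim fun n ↦ mem_test

theorem rePred_exists {P : α → β → Prop} (hP : REPred fun p : α × β ↦ P p.1 p.2) :
    REPred fun a ↦ ∃ b, P a b := by
  obtain ⟨ψ, hψ, hdom, -⟩ := exists_partrec_choice hP
  exact hψ.dom_re.of_eq hdom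

theorem exists_computable_choice {P : α → β → Prop} (hP : REPred fun p : α × β ↦ P p.1 p.2)
    (hex : ∀ a, ∃ b, P a b) : ∃ f : α → β, Computable f ∧ ∀ a, P a (f a) := by
  obtain ⟨ψ, hψ, hdom, hspec⟩ := exists_partrec_choice hP
  have htot a : (ψ a).Dom := (hdom a).2 (hex a)
  exact ⟨fun a ↦ (ψ a).get (htot a), hψ.of_eq fun a ↦ (Part.some_get (htot a)).symm,
    fun a ↦ hspec a _ (Part.get_mem _)⟩

theorem computable_of_rePred_graph {f : α → β} (hf : REPred fun p : α × β ↦ f p.1 = p.2) :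
    Computable f := by
  obtain ⟨g, hg, hfg⟩ := exists_computable_choice hf fun a ↦ ⟨f a, rfl⟩
  exact hg.of_eq fun a ↦ (hfg a).symm

theorem computablePred_comp {p : β → Prop} (hp : ComputablePred p) {f : α → β}
    (hf : Computable f) : ComputablePred fun a ↦ p (f a) := by
  obtain ⟨b, hb, rfl⟩ := ComputablePred.computable_iff.1 hp
  exact ComputablePred.computable_iff.2 ⟨_, hb.comp hf, rfl⟩

theorem computablePred_and {p q : α → Prop} (hp : ComputablePred p) (hq : ComputablePred q) :
    ComputablePred fun a ↦ p a ∧ q a := by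
  obtain ⟨b, hb, rfl⟩ := ComputablePred.computable_iff.1 hp
  obtain ⟨c, hc, rfl⟩ := ComputablePred.computable_iff.1 hq
  exact ComputablePred.computable_iff.2
    ⟨_, Primrec.and.to_comp.comp hb hc, funext fun a ↦ by simp⟩

theorem computable_ite {c : α → Prop} [DecidablePred c] (hc : ComputablePred c) {f g : α → β}
    (hf : Computable f) (hg : Computable g) : Computable fun a ↦ if c a then f a else g a := by
  simpa [Bool.cond_decide] using hc.decide.cond hf hg

theorem computablePred_forall_lt {p : α → ℕ → Prop}
    (hp : ComputablePred fun q : α × ℕ ↦ p q.1 q.2) {n : α → ℕ} (hn : Computable n) :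
    ComputablePred fun a ↦ ∀ t < n a, p a t := by
  obtain ⟨b, hb, hpb⟩ := ComputablePred.computable_iff.1 hp
  have hstep : Computable₂ fun (a : α) (q : ℕ × Bool) ↦ b (a, q.1) && q.2 :=
    Primrec.and.to_comp.comp
      (hb.comp (Computable.fst.pair (Computable.fst.comp Computable.snd)))
      (Computable.snd.comp Computable.snd)
  refine ComputablePred.computable_iff.2
    ⟨_, Computable.nat_rec hn (Computable.const true) hstep, funext fun a ↦ propext ?_⟩
  have hpb' (t : ℕ) : p a t ↔ b (a, t) := iff_of_eq (congrFun hpb (a, t))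
  induction n a with
  | zero => simp
  | succ n ih =>
    exact Nat.forall_lt_succ_right.trans ((and_congr ih (hpb' n)).trans
      (and_comm.trans (iff_of_eq (Bool.and_eq_true _ _).symm)))

end Choice

/-! ### Computability of rational arithmetic -/

section RationalArithmetic

open Encodable Denumerable

/-- The pair (numerator, denominator) coded as a natural number. The `Primcodable` code of a
rational `q` is the position of `ratCode q` in the increasing enumeration of all such numbers. -/
def ratCode (q : ℚ) : ℕ := Nat.pair (encode q.num) q.den

instance : DecidablePred (· ∈ range ratCode) := @decidableRangeEncode ℚ Rat.instEncodable

instance : Infinite (range ratCode) :=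
  (Equiv.ofInjective ratCode (@encode_injective ℚ Rat.instEncodable)).infinite_iff.1 inferInstance

theorem ratCode_ofNat (n : ℕ) : ratCode (ofNat ℚ n) = Nat.Subtype.ofNat (range ratCode) n :=
  congrArg Subtype.val ((@equivRangeEncode ℚ Rat.instEncodable).apply_symm_apply _)

theorem encode_int (z : ℤ) :
    encode z = 2 * z.toNat + 2 * (-z).toNat - (if z < 0 then 1 else 0) := by
  cases z with
  | ofNat n =>
    change 2 * n = _
    simp [(Int.natCast_nonneg n).not_gt]
  | negSucc n =>
    change 2 * n + 1 = _
    simp [Int.negSucc_lt_zero]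
    omega

theorem coprime_iff_forall_lt {m n : ℕ} :
    m.Coprime n ↔ ∀ d < m + n + 3, ¬(2 ≤ d ∧ m % d = 0 ∧ n % d = 0) := by
  constructor
  · rintro h d - ⟨hd, hm, hn⟩
    have := Nat.eq_one_of_dvd_coprimes h (Nat.dvd_of_mod_eq_zero hm) (Nat.dvd_of_mod_eq_zero hn)
    omega
  · intro h
    by_contra hmn
    obtain ⟨p, hp, hpm, hpn⟩ := Nat.Prime.not_coprime_iff_dvd.1 hmn
    rcases Nat.eq_zero_or_pos m with rfl | hm
    · rcases Nat.eq_zero_or_pos n with rfl | hn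
      · exact h 2 (by omega) (by simp)
      · exact h p (by have := Nat.le_of_dvd hn hpn; omega)
          ⟨hp.two_le, Nat.mod_eq_zero_of_dvd hpm, Nat.mod_eq_zero_of_dvd hpn⟩
    · exact h p (by have := Nat.le_of_dvd hm hpm; omega)
          ⟨hp.two_le, Nat.mod_eq_zero_of_dvd hpm, Nat.mod_eq_zero_of_dvd hpn⟩

theorem primrecRel_coprime : PrimrecRel Nat.Coprime := by
  have hcommon : PrimrecRel fun (d : ℕ) (p : ℕ × ℕ) ↦
      ¬(2 ≤ d ∧ p.1 % d = 0 ∧ p.2 % d = 0) := by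
    refine ((Primrec.nat_le.comp (Primrec.const 2) Primrec.fst).and
      (PrimrecPred.and ?_ ?_)).not
    · exact Primrec.eq.comp
        (Primrec.nat_mod.comp (Primrec.fst.comp Primrec.snd) Primrec.fst) (Primrec.const 0)
    · exact Primrec.eq.comp
        (Primrec.nat_mod.comp (Primrec.snd.comp Primrec.snd) Primrec.fst) (Primrec.const 0)
  have hbound : Primrec fun p : ℕ × ℕ ↦ p.1 + p.2 + 3 :=
    Primrec.nat_add.comp (Primrec.nat_add.comp Primrec.fst Primrec.snd) (Primrec.const 3)
  refine (hcommon.forall_mem_list.comp (Primrec.list_range.comp hbound) Primrec.id).of_eq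
    fun p ↦ ?_
  simpa only [List.mem_range, id] using coprime_iff_forall_lt.symm

theorem mem_range_ratCode {m : ℕ} :
    m ∈ range ratCode ↔ 0 < m.unpair.2 ∧ ((m.unpair.1 + 1) / 2).Coprime m.unpair.2 := by
  have natAbs_eq (z : ℤ) : (encode z + 1) / 2 = z.natAbs := by
    rw [encode_int]
    split_ifs <;> omega
  constructor
  · rintro ⟨q, rfl⟩
    simpa only [ratCode, Nat.unpair_pair, natAbs_eq] using ⟨q.pos, q.reduced⟩
  · rintro ⟨hpos, hcop⟩
    have hnum : encode (ofNat ℤ m.unpair.1) = m.unpair.1 := encode_ofNat _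
    rw [← hnum, natAbs_eq] at hcop
    exact ⟨⟨ofNat ℤ m.unpair.1, m.unpair.2, hpos.ne', hcop⟩, by
      rw [ratCode, hnum, Nat.pair_unpair]⟩

theorem computablePred_mem_range_ratCode : ComputablePred (· ∈ range ratCode) := by
  have hden : Primrec fun m : ℕ ↦ m.unpair.2 := Primrec.snd.comp Primrec.unpair
  have hnum : Primrec fun m : ℕ ↦ (m.unpair.1 + 1) / 2 :=
    Primrec.nat_div.comp (Primrec.succ.comp (Primrec.fst.comp Primrec.unpair)) (Primrec.const 2)
  exact ((Primrec.nat_lt.comp (Primrec.const 0) hden).and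
    (primrecRel_coprime.comp hnum hden)).computablePred.of_eq fun m ↦ mem_range_ratCode.symm

theorem computable_ratCode : Computable ratCode := by
  have exists_next (x : ℕ) : ∃ m, x + m + 1 ∈ range ratCode := by
    have hinf : (range ratCode).Infinite := infinite_coe_iff.1 inferInstance
    obtain ⟨y, hy, hxy⟩ := hinf.exists_gt x
    exact ⟨y - x - 1, by rwa [show x + (y - x - 1) + 1 = y by omega]⟩
  have find_next : Computable fun x ↦ Nat.find (exists_next x) :=
    Computable.find (computablePred_comp computablePred_mem_range_ratCode
      (Primrec.succ.comp Primrec.nat_add).to_comp) exists_next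
  have enum : Computable fun n : ℕ ↦ (Nat.Subtype.ofNat (range ratCode) n : ℕ) := by
    have hlast : Computable fun p : ℕ × (ℕ × ℕ) ↦ p.2.2 := Computable.snd.comp Computable.snd
    refine (Computable.nat_rec (h := fun _ p ↦ p.2 + Nat.find (exists_next p.2) + 1) Computable.id
      (Computable.const (Nat.Subtype.ofNat (range ratCode) 0 : ℕ))
      (Computable.succ.comp (Primrec.nat_add.to_comp.comp hlast (find_next.comp hlast)))).of_eq
      fun n ↦ ?_
    induction n with
    | zero => rfl
    | succ n ih =>
      simp only [id] at ih ⊢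
      simp only [ih]
      rfl
  exact (enum.comp Computable.encode).of_eq fun q ↦ by
    rw [← ratCode_ofNat]
    exact congrArg ratCode (ofNat_encode q)

theorem computable_den : Computable Rat.den :=
  (Computable.snd.comp (Computable.unpair.comp computable_ratCode)).of_eq fun q ↦ by
    simp only [ratCode, Nat.unpair_pair]

theorem computable_encode_num : Computable fun q : ℚ ↦ encode q.num :=
  (Computable.fst.comp (Computable.unpair.comp computable_ratCode)).of_eq fun q ↦ by
    simp only [ratCode, Nat.unpair_pair]

theorem computable_num_toNat : Computable fun q : ℚ ↦ q.num.toNat := by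
  have h : Primrec fun a : ℕ ↦ if a % 2 = 0 then a / 2 else 0 :=
    Primrec.ite (Primrec.eq.comp (Primrec.nat_mod.comp Primrec.id (Primrec.const 2))
      (Primrec.const 0)) (Primrec.nat_div.comp Primrec.id (Primrec.const 2)) (Primrec.const 0)
  refine (h.to_comp.comp computable_encode_num).of_eq fun q ↦ ?_
  rw [encode_int]
  split_ifs <;> omega

theorem computable_neg_num_toNat : Computable fun q : ℚ ↦ (-q.num).toNat := by
  have h : Primrec fun a : ℕ ↦ if a % 2 = 0 then 0 else a / 2 + 1 :=
    Primrec.ite (Primrec.eq.comp (Primrec.nat_mod.comp Primrec.id (Primrec.const 2))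
      (Primrec.const 0)) (Primrec.const 0)
      (Primrec.succ.comp (Primrec.nat_div.comp Primrec.id (Primrec.const 2)))
  refine (h.to_comp.comp computable_encode_num).of_eq fun q ↦ ?_
  rw [encode_int]
  split_ifs <;> omega

theorem rat_mul_den_eq_toNat_sub_toNat (q : ℚ) :
    q * q.den = (q.num.toNat : ℚ) - ((-q.num).toNat : ℚ) := by
  have h : (q.num.toNat : ℤ) - ((-q.num).toNat : ℤ) = q.num := by omega
  rw [Rat.mul_den_eq_num]
  exact_mod_cast h.symm

variable {α : Type*} [Primcodable α]

theorem computable_nat_add {f g : α → ℕ} (hf : Computable f) (hg : Computable g) :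
    Computable fun a ↦ f a + g a := Primrec.nat_add.to_comp.comp hf hg

theorem computable_nat_mul {f g : α → ℕ} (hf : Computable f) (hg : Computable g) :
    Computable fun a ↦ f a * g a := Primrec.nat_mul.to_comp.comp hf hg

theorem computable_of_mul_eq_sub {f : α → ℚ} {p m d : α → ℕ} (hp : Computable p)
    (hm : Computable m) (hd : Computable d) (hd₀ : ∀ a, d a ≠ 0)
    (hf : ∀ a, f a * d a = p a - m a) : Computable f := by
  have eq_iff (a : α) (q : ℚ) : p a * q.den + (-q.num).toNat * d a =
      m a * q.den + q.num.toNat * d a ↔ f a = q := by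
    have hd' : (d a : ℚ) ≠ 0 := mod_cast hd₀ a
    have hq' : (q.den : ℚ) ≠ 0 := mod_cast q.den_nz
    rw [← mul_left_inj' (mul_ne_zero hd' hq'), ← @Nat.cast_inj ℚ]
    push_cast
    have hfa := hf a
    have hq := rat_mul_den_eq_toNat_sub_toNat q
    constructor <;> intro h
    · linear_combination h + q.den * hfa - d a * hq
    · linear_combination h - q.den * hfa + d a * hq
  refine computable_of_rePred_graph (ComputablePred.to_re ?_)
  have hden : Computable fun x : α × ℚ ↦ x.2.den := computable_den.comp Computable.snd
  have hd₁ : Computable fun x : α × ℚ ↦ d x.1 := hd.comp Computable.fst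
  have lhs : Computable fun x : α × ℚ ↦ p x.1 * x.2.den + (-x.2.num).toNat * d x.1 :=
    computable_nat_add (computable_nat_mul (hp.comp Computable.fst) hden)
      (computable_nat_mul (computable_neg_num_toNat.comp Computable.snd) hd₁)
  have rhs : Computable fun x : α × ℚ ↦ m x.1 * x.2.den + x.2.num.toNat * d x.1 :=
    computable_nat_add (computable_nat_mul (hm.comp Computable.fst) hden)
      (computable_nat_mul (computable_num_toNat.comp Computable.snd) hd₁)
  exact (computablePred_comp Primrec.eq.computablePred (lhs.pair rhs)).of_eq
    fun x ↦ eq_iff x.1 x.2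

theorem computable_rat_add {f g : α → ℚ} (hf : Computable f) (hg : Computable g) :
    Computable fun a ↦ f a + g a := by
  have hdf := computable_den.comp hf
  have hdg := computable_den.comp hg
  refine computable_of_mul_eq_sub
    (computable_nat_add (computable_nat_mul (computable_num_toNat.comp hf) hdg)
      (computable_nat_mul (computable_num_toNat.comp hg) hdf))
    (computable_nat_add (computable_nat_mul (computable_neg_num_toNat.comp hf) hdg)
      (computable_nat_mul (computable_neg_num_toNat.comp hg) hdf))
    (computable_nat_mul hdf hdg) (fun a ↦ mul_ne_zero (f a).den_nz (g a).den_nz) fun a ↦ ?_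
  push_cast
  linear_combination (g a).den * rat_mul_den_eq_toNat_sub_toNat (f a) +
    (f a).den * rat_mul_den_eq_toNat_sub_toNat (g a)

theorem computable_rat_mul {f g : α → ℚ} (hf : Computable f) (hg : Computable g) :
    Computable fun a ↦ f a * g a := by
  have hpf := computable_num_toNat.comp hf
  have hpg := computable_num_toNat.comp hg
  have hmf := computable_neg_num_toNat.comp hf
  have hmg := computable_neg_num_toNat.comp hg
  refine computable_of_mul_eq_sub
    (computable_nat_add (computable_nat_mul hpf hpg) (computable_nat_mul hmf hmg))
    (computable_nat_add (computable_nat_mul hpf hmg) (computable_nat_mul hmf hpg))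
    (computable_nat_mul (computable_den.comp hf) (computable_den.comp hg))
    (fun a ↦ mul_ne_zero (f a).den_nz (g a).den_nz) fun a ↦ ?_
  push_cast
  linear_combination (g a) * (g a).den * rat_mul_den_eq_toNat_sub_toNat (f a) +
    ((f a).num.toNat - (-(f a).num).toNat) * rat_mul_den_eq_toNat_sub_toNat (g a)

theorem computablePred_rat_le {f g : α → ℚ} (hf : Computable f) (hg : Computable g) :
    ComputablePred fun a ↦ f a ≤ g a := by
  have hdf := computable_den.comp hf
  have hdg := computable_den.comp hg
  have lhs := computable_nat_add (computable_nat_mul (computable_num_toNat.comp hf) hdg)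
    (computable_nat_mul (computable_neg_num_toNat.comp hg) hdf)
  have rhs := computable_nat_add (computable_nat_mul (computable_num_toNat.comp hg) hdf)
    (computable_nat_mul (computable_neg_num_toNat.comp hf) hdg)
  refine (computablePred_comp Primrec.nat_le.computablePred (lhs.pair rhs)).of_eq fun a ↦ ?_
  have hpos : (0 : ℚ) < (f a).den * (g a).den := mod_cast Nat.mul_pos (f a).pos (g a).pos
  rw [← mul_le_mul_iff_left₀ hpos]
  refine (@Nat.cast_le ℚ).symm.trans ?_
  push_cast
  have hfa := congrArg (· * ((g a).den : ℚ)) (rat_mul_den_eq_toNat_sub_toNat (f a))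
  have hga := congrArg (· * ((f a).den : ℚ)) (rat_mul_den_eq_toNat_sub_toNat (g a))
  constructor <;> intro h <;> linarith

theorem computable_rat_max {f g : α → ℚ} (hf : Computable f) (hg : Computable g) :
    Computable fun a ↦ max (f a) (g a) :=
  (computable_ite (computablePred_rat_le hf hg) hg hf).of_eq fun _ ↦ (max_def _ _).symm

end RationalArithmetic

section RatComputable

variable {α β : Type*} [Primcodable α] [Primcodable β]

/-- A real-valued function that takes rational values and is computable as a function to `ℚ`. -/
def RatComputable (f : α → ℝ) : Prop := ∃ g : α → ℚ, Computable g ∧ ∀ a, f a = g a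

namespace RatComputable

variable {f g : α → ℝ}

theorem ratCast {g : α → ℚ} (hg : Computable g) : RatComputable fun a ↦ (g a : ℝ) :=
  ⟨g, hg, fun _ ↦ rfl⟩

theorem const (q : ℚ) : RatComputable fun _ : α ↦ (q : ℝ) := ratCast (Computable.const q)

theorem comp {f : β → ℝ} (hf : RatComputable f) {e : α → β} (he : Computable e) :
    RatComputable fun a ↦ f (e a) := by
  obtain ⟨g, hg, hfg⟩ := hf
  exact ⟨fun a ↦ g (e a), hg.comp he, fun a ↦ hfg (e a)⟩

theorem add (hf : RatComputable f) (hg : RatComputable g) :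
    RatComputable fun a ↦ f a + g a := by
  obtain ⟨f', hf', hff'⟩ := hf
  obtain ⟨g', hg', hgg'⟩ := hg
  exact ⟨_, computable_rat_add hf' hg', fun a ↦ by simp [hff', hgg']⟩

theorem mul (hf : RatComputable f) (hg : RatComputable g) :
    RatComputable fun a ↦ f a * g a := by
  obtain ⟨f', hf', hff'⟩ := hf
  obtain ⟨g', hg', hgg'⟩ := hg
  exact ⟨_, computable_rat_mul hf' hg', fun a ↦ by simp [hff', hgg']⟩

theorem neg (hf : RatComputable f) : RatComputable fun a ↦ -f a := by
  simpa using (const (-1)).mul hf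

theorem sub (hf : RatComputable f) (hg : RatComputable g) :
    RatComputable fun a ↦ f a - g a := by
  simpa only [sub_eq_add_neg] using hf.add hg.neg

theorem computablePred_le (hf : RatComputable f) (hg : RatComputable g) :
    ComputablePred fun a ↦ f a ≤ g a := by
  obtain ⟨f', hf', hff'⟩ := hf
  obtain ⟨g', hg', hgg'⟩ := hg
  exact (computablePred_rat_le hf' hg').of_eq fun a ↦ by rw [hff', hgg', Rat.cast_le]

theorem computablePred_lt (hf : RatComputable f) (hg : RatComputable g) :
    ComputablePred fun a ↦ f a < g a :=
  (hg.computablePred_le hf).not.of_eq fun _ ↦ not_le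

theorem max (hf : RatComputable f) (hg : RatComputable g) :
    RatComputable fun a ↦ max (f a) (g a) := by
  obtain ⟨f', hf', hff'⟩ := hf
  obtain ⟨g', hg', hgg'⟩ := hg
  exact ⟨_, computable_rat_max hf' hg', fun a ↦ by simp only [hff', hgg', Rat.cast_max]⟩

theorem min (hf : RatComputable f) (hg : RatComputable g) :
    RatComputable fun a ↦ min (f a) (g a) := by
  simpa only [max_neg_neg, neg_neg] using (hf.neg.max hg.neg).neg

theorem abs (hf : RatComputable f) : RatComputable fun a ↦ |f a| := hf.max hf.neg

theorem pow (hf : RatComputable f) {n : α → ℕ} (hn : Computable n) :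
    RatComputable fun a ↦ f a ^ n a := by
  obtain ⟨f', hf', hff'⟩ := hf
  refine ⟨fun a ↦ f' a ^ n a, ?_, fun a ↦ by simp [hff']⟩
  refine (Computable.nat_rec (h := fun a p ↦ p.2 * f' a) hn (Computable.const 1)
    (computable_rat_mul (Computable.snd.comp Computable.snd) (hf'.comp Computable.fst))).of_eq
    fun a ↦ ?_
  induction n a with
  | zero => exact (pow_zero _).symm
  | succ n ih => simp only [ih, pow_succ]

theorem of_succ_eq_max {u : α → ℕ → ℝ} {t : α × ℕ → ℝ} (hzero : RatComputable (u · 0))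
    (ht : RatComputable t) (hsucc : ∀ a n, u a (n + 1) = Max.max (u a n) (t (a, n))) :
    RatComputable fun p : α × ℕ ↦ u p.1 p.2 := by
  obtain ⟨v, hv, huv⟩ := hzero
  obtain ⟨w, hw, htw⟩ := ht
  have hstep : Computable₂ fun (p : α × ℕ) (q : ℕ × ℚ) ↦ Max.max q.2 (w (p.1, q.1)) :=
    computable_rat_max (Computable.snd.comp Computable.snd) (hw.comp
      ((Computable.fst.comp Computable.fst).pair (Computable.fst.comp Computable.snd)))
  refine ⟨_, Computable.nat_rec Computable.snd (hv.comp Computable.fst) hstep, fun ⟨a, n⟩ ↦ ?_⟩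
  induction n with
  | zero => exact huv a
  | succ n ih =>
    dsimp only at ih ⊢
    rw [hsucc, ih, htw, ← Rat.cast_max]

end RatComputable

end RatComputable

/-! ### Computable points and `Π⁰₁` sets -/

section ComputablePoint

open scoped NNReal

variable {γ : Type*} [Primcodable γ]

theorem eventually_mul_half_pow_lt (K : ℝ) {ε : ℝ} (hε : 0 < ε) :
    ∀ᶠ j : ℕ in Filter.atTop, K * 2⁻¹ ^ j < ε := by
  have hlim : Filter.Tendsto (fun j : ℕ ↦ K * (2⁻¹ : ℝ) ^ j) Filter.atTop (nhds (K * 0)) :=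
    (tendsto_pow_atTop_nhds_zero_of_lt_one (by norm_num) (by norm_num)).const_mul K
  exact hlim.eventually_lt_const (by simpa using hε)

/-- The inclusion `ℚ² ⊆ ℝ²`. -/
def ratPoint (q : ℚ × ℚ) : ℝ × ℝ := (q.1, q.2)

theorem denseRange_ratPoint : DenseRange ratPoint :=
  Rat.denseRange_cast.prodMap Rat.denseRange_cast

theorem ratComputable_half_pow {n : γ → ℕ} (hn : Computable n) :
    RatComputable fun a ↦ (2⁻¹ : ℝ) ^ n a := by
  simpa using (RatComputable.const 2⁻¹).pow hn

theorem ratComputable_two_pow {n : γ → ℕ} (hn : Computable n) :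
    RatComputable fun a ↦ (2 : ℝ) ^ n a := by
  simpa using (RatComputable.const 2).pow hn

theorem IsComputablePoint.exists_computable_approx {x : ℝ × ℝ} (hx : IsComputablePoint x) :
    ∃ f : ℕ → ℚ × ℚ, Computable f ∧ ∀ j, dist x (ratPoint (f j)) < 2⁻¹ ^ j := by
  obtain ⟨r, hr, hr'⟩ := ratComputable_half_pow (Computable.id (α := ℕ))
  have hre : REPred fun p : ℕ × (ℚ × ℚ) ↦ x ∈ ballOfCode (p.2, r p.1) :=
    rePred_comp hx (Computable.snd.pair (hr.comp Computable.fst))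
  refine exists_computable_choice (hre.of_eq fun p ↦ ?_) fun j ↦
    denseRange_ratPoint.exists_dist_lt x (by positivity)
  have hball : x ∈ ballOfCode (p.2, r p.1) ↔ dist x (ratPoint p.2) < r p.1 := Iff.rfl
  rw [hball, ← hr']
  rfl

variable {h : γ → ℝ × ℝ → ℝ} {K : γ → ℝ≥0}

theorem IsComputablePoint.rePred_pos (hh : RatComputable fun p : γ × (ℚ × ℚ) ↦ h p.1 (ratPoint p.2))
    (hK : RatComputable fun c ↦ (K c : ℝ)) (hLip : ∀ c, LipschitzWith (K c) (h c))
    {x : ℝ × ℝ} (hx : IsComputablePoint x) : REPred fun c ↦ 0 < h c x := by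
  obtain ⟨f, hf, hfx⟩ := hx.exists_computable_approx
  have htest : ComputablePred fun p : γ × ℕ ↦ K p.1 * 2⁻¹ ^ p.2 < h p.1 (ratPoint (f p.2)) :=
    ((hK.comp Computable.fst).mul (ratComputable_half_pow Computable.snd)).computablePred_lt
      (hh.comp (Computable.fst.pair (hf.comp Computable.snd)))
  refine (rePred_exists (P := fun c j ↦ K c * 2⁻¹ ^ j < h c (ratPoint (f j))) htest.to_re).of_eq
    fun c ↦ ?_
  have near (j : ℕ) : |h c x - h c (ratPoint (f j))| ≤ K c * 2⁻¹ ^ j :=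
    ((hLip c).dist_le_mul _ _).trans (by gcongr; exact (hfx j).le)
  constructor
  · rintro ⟨j, hj⟩
    linarith [(abs_le.1 (near j)).1]
  · intro hpos
    obtain ⟨j, hj⟩ := (eventually_mul_half_pow_lt (2 * K c) hpos).exists
    exact ⟨j, by linarith [(abs_le.1 (near j)).2]⟩

theorem isPi01Closed_setOf_forall_nonpos
    (hh : RatComputable fun p : γ × (ℚ × ℚ) ↦ h p.1 (ratPoint p.2))
    (hK : RatComputable fun c ↦ (K c : ℝ)) (hLip : ∀ c, LipschitzWith (K c) (h c)) :
    IsPi01Closed {x | ∀ c, h c x ≤ 0} := by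
  have near (c x y) : |h c x - h c y| ≤ K c * dist x y := (hLip c).dist_le_mul x y
  refine ⟨fun b ↦ ∃ c, (K c : ℝ) * b.2 < h c (ratPoint b.1),
    rePred_exists (ComputablePred.to_re ?_), ?_⟩
  · exact ((hK.comp Computable.snd).mul
      (RatComputable.ratCast (Computable.snd.comp Computable.fst))).computablePred_lt
      (hh.comp (Computable.snd.pair (Computable.fst.comp Computable.fst)))
  ext x
  simp only [mem_sdiff, mem_univ, true_and, mem_iUnion, mem_ofPred_eq, not_exists]
  constructor
  · rintro hx b ⟨c, hc⟩ hxb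
    have hdist : K c * dist x (ratPoint b.1) ≤ K c * b.2 := by
      gcongr
      exact le_of_lt hxb
    linarith [hx c, (abs_le.1 (near c x (ratPoint b.1))).1]
  · intro hx c
    by_contra! hpos
    obtain ⟨j, hj⟩ := (eventually_mul_half_pow_lt (2 * K c) hpos).exists
    obtain ⟨q, hq⟩ := denseRange_ratPoint.exists_dist_lt x (by positivity : (0 : ℝ) < 2⁻¹ ^ j)
    have hdist : K c * dist x (ratPoint q) ≤ K c * 2⁻¹ ^ j := by gcongr
    refine hx (q, 2⁻¹ ^ j) ⟨c, ?_⟩ (by simpa [ballOfCode, ratPoint] using hq)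
    push_cast
    linarith [(abs_le.1 (near c x (ratPoint q))).2]

theorem ratComputable_norm_ratPoint : RatComputable fun q : ℚ × ℚ ↦ ‖ratPoint q‖ :=
  (RatComputable.ratCast Computable.fst).abs.max (RatComputable.ratCast Computable.snd).abs

theorem ratComputable_dist_ratPoint :
    RatComputable fun p : (ℚ × ℚ) × (ℚ × ℚ) ↦ dist (ratPoint p.1) (ratPoint p.2) :=
  ((RatComputable.ratCast (Computable.fst.comp Computable.fst)).sub
    (RatComputable.ratCast (Computable.fst.comp Computable.snd))).abs.max
  ((RatComputable.ratCast (Computable.snd.comp Computable.fst)).sub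
    (RatComputable.ratCast (Computable.snd.comp Computable.snd))).abs

theorem IsComputablePoint.map {φ : ℝ × ℝ → ℝ × ℝ} {K : ℝ≥0} (hLip : LipschitzWith K φ)
    {g : ℚ × ℚ → ℚ × ℚ} (hg : Computable g) (hφ : ∀ q, φ (ratPoint q) = ratPoint (g q))
    {x : ℝ × ℝ} (hx : IsComputablePoint x) : IsComputablePoint (φ x) := by
  have hre : REPred fun b : (ℚ × ℚ) × ℚ ↦ 0 < (b.2 : ℝ) - dist (φ x) (ratPoint b.1) := by
    refine hx.rePred_pos (h := fun (b : (ℚ × ℚ) × ℚ) x ↦ (b.2 : ℝ) - dist (φ x) (ratPoint b.1))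
      (K := fun _ ↦ ⌈K⌉₊) ?_ (by simpa using RatComputable.const ⌈K⌉₊) fun b ↦ ?_
    · simp only [hφ]
      exact (RatComputable.ratCast (Computable.snd.comp Computable.fst)).sub
        (ratComputable_dist_ratPoint.comp ((hg.comp Computable.snd).pair
          (Computable.fst.comp Computable.fst)))
    · simpa using (LipschitzWith.const (b.2 : ℝ)).sub
        ((LipschitzWith.dist_left (ratPoint b.1)).comp (hLip.weaken (Nat.le_ceil K)))
  exact hre.of_eq fun b ↦ sub_pos

/-- The composition `f (s - 1) ∘ ⋯ ∘ f 0`. -/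
def composeUpTo {X : Type*} (f : ℕ → X → X) : ℕ → X → X
  | 0 => id
  | s + 1 => f s ∘ composeUpTo f s

theorem exists_computable_composeUpTo {f : ℕ → ℝ × ℝ → ℝ × ℝ}
    (hfst : RatComputable fun p : ℕ × (ℚ × ℚ) ↦ (f p.1 (ratPoint p.2)).1)
    (hsnd : RatComputable fun p : ℕ × (ℚ × ℚ) ↦ (f p.1 (ratPoint p.2)).2) :
    ∃ g : ℕ × (ℚ × ℚ) → ℚ × ℚ, Computable g ∧
      ∀ s q, composeUpTo f s (ratPoint q) = ratPoint (g (s, q)) := by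
  obtain ⟨u, hu, hfu⟩ := hfst
  obtain ⟨v, hv, hfv⟩ := hsnd
  let w (r : ℕ × (ℚ × ℚ)) : ℚ × ℚ := (u r, v r)
  have hw : Computable w := hu.pair hv
  have hfw (r : ℕ × (ℚ × ℚ)) : f r.1 (ratPoint r.2) = ratPoint (w r) :=
    Prod.ext (hfu r) (hfv r)
  refine ⟨_, Computable.nat_rec Computable.fst Computable.snd (hw.comp Computable.snd).to₂,
    fun s q ↦ ?_⟩
  induction s with
  | zero => rfl
  | succ s ih =>
    rw [composeUpTo, Function.comp_apply, ih]
    exact hfw (s, _)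

end ComputablePoint

/-! ### Dendroids and fans -/

section Dendroid

variable {α β : Type*} [TopologicalSpace α] [TopologicalSpace β]

theorem IsArc.isPreconnected {T : Set α} {x y : α} (hT : IsArc T x y) : IsPreconnected T := by
  obtain ⟨f, hf, -, rfl, -⟩ := hT
  exact isPreconnected_range hf

theorem IsArc.left_mem {T : Set α} {x y : α} (hT : IsArc T x y) : x ∈ T := by
  obtain ⟨f, -, -, rfl, rfl, -⟩ := hT
  exact mem_range_self _

theorem IsArc.right_mem {T : Set α} {x y : α} (hT : IsArc T x y) : y ∈ T := by
  obtain ⟨f, -, -, rfl, -, rfl⟩ := hT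
  exact mem_range_self _

theorem IsArc.image {T : Set α} {x y : α} (hT : IsArc T x y) {g : α → β} (hg : Continuous g)
    (hinj : Function.Injective g) : IsArc (g '' T) (g x) (g y) := by
  obtain ⟨f, hf, hf', rfl, rfl, rfl⟩ := hT
  exact ⟨g ∘ f, hg.comp hf, hinj.comp hf', range_comp g f, rfl, rfl⟩

theorem isDendroid_of_forall_exists_arc_subset [T2Space α] {X : Set α} (hX : IsContinuum X)
    (harc : ∀ x ∈ X, ∀ y ∈ X, x ≠ y → ∃ T, IsArc T x y ∧
      ∀ A ⊆ X, IsClosed A → IsPreconnected A → x ∈ A → y ∈ A → T ⊆ A) : IsDendroid X := by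
  refine ⟨hX, fun x hx y hy hxy ↦ ?_, fun Y hYX hY A B hAY hBY hA hB hA' hB' hAB ↦ ⟨?_, ?_⟩⟩
  · obtain ⟨T, hT, hmin⟩ := harc x hx y hy hxy
    exact ⟨T, hmin X Subset.rfl hX.1.isClosed hX.2.isPreconnected hx hy, hT⟩
  · obtain ⟨z, -, hz⟩ := isPreconnected_closed_iff.1 hY.2.isPreconnected A B hA hB hAB.ge
      (hA'.nonempty.mono fun z hz ↦ ⟨hAY hz, hz⟩) (hB'.nonempty.mono fun z hz ↦ ⟨hBY hz, hz⟩)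
    exact ⟨z, hz⟩
  · refine isPreconnected_of_forall_pair fun x hx y hy ↦ ?_
    rcases eq_or_ne x y with rfl | hxy
    · exact ⟨{x}, singleton_subset_iff.2 hx, rfl, rfl, isPreconnected_singleton⟩
    obtain ⟨T, hT, hmin⟩ := harc x (hYX (hAY hx.1)) y (hYX (hAY hy.1)) hxy
    exact ⟨T, subset_inter
      (hmin A (hAY.trans hYX) hA hA'.isPreconnected hx.1 hy.1)
      (hmin B (hBY.trans hYX) hB hB'.isPreconnected hx.2 hy.2),
      hT.left_mem, hT.right_mem, hT.isPreconnected⟩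

theorem IsDendroid.preimage_homeomorph {X : Set β} (hX : IsDendroid X) (e : α ≃ₜ β) :
    IsDendroid (e ⁻¹' X) := by
  obtain ⟨⟨hcompact, hconn⟩, harcs, hunicoherent⟩ := hX
  refine ⟨⟨e.isCompact_preimage.2 hcompact, e.isConnected_preimage.2 hconn⟩,
    fun x hx y hy hxy ↦ ?_, fun Y hYX hY A B hAY hBY hA hB hA' hB' hAB ↦ ?_⟩
  · obtain ⟨T, hTX, hT⟩ := harcs (e x) hx (e y) hy (e.injective.ne hxy)
    refine ⟨e.symm '' T, ?_, ?_⟩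
    · rintro _ ⟨z, hz, rfl⟩
      simpa using hTX hz
    · simpa using hT.image e.symm.continuous e.symm.injective
  · rw [← e.isConnected_image, image_inter e.injective]
    exact hunicoherent (e '' Y) (image_subset_iff.2 hYX)
      ⟨e.isCompact_image.2 hY.1, e.isConnected_image.2 hY.2⟩ (e '' A) (e '' B)
      (image_mono hAY) (image_mono hBY) (e.isClosed_image.2 hA) (e.isClosed_image.2 hB)
      (e.isConnected_image.2 hA') (e.isConnected_image.2 hB') (by rw [← image_union, hAB])

end Dendroid

section Arc

variable {E : Type*} [AddCommGroup E] [Module ℝ E] [TopologicalSpace E] [ContinuousAdd E]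
  [ContinuousSMul ℝ E] {x y : E}

theorem isArc_segment (hxy : x ≠ y) : IsArc (segment ℝ x y) x y := by
  refine ⟨fun t ↦ AffineMap.lineMap x y (t : ℝ), ?_, ?_, ?_, by simp, by simp⟩
  · simp only [AffineMap.lineMap_apply_module]
    fun_prop
  · exact (AffineMap.lineMap_injective ℝ hxy).comp Subtype.val_injective
  · rw [segment_eq_image_lineMap, image_eq_range]

theorem exists_isArc_subset_segment_union_segment (hxy : LinearIndependent ℝ ![x, y]) :
    ∃ T ⊆ segment ℝ 0 x ∪ segment ℝ 0 y, IsArc T x y := by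
  let f (t : Icc (0 : ℝ) 1) : E := max (1 - 2 * (t : ℝ)) 0 • x + max (2 * (t : ℝ) - 1) 0 • y
  refine ⟨range f, ?_, f, by fun_prop, ?_, rfl, by simp [f], by simp [f]; norm_num⟩
  · rintro _ ⟨⟨t, ht₀, ht₁⟩, rfl⟩
    simp only [f, segment_eq_image', sub_zero, zero_add]
    rcases le_total (2 * t) 1 with ht | ht
    · exact Or.inl ⟨1 - 2 * t, ⟨by linarith, by linarith⟩, by
        rw [max_eq_left (by linarith), max_eq_right (by linarith), zero_smul, add_zero]⟩
    · exact Or.inr ⟨2 * t - 1, ⟨by linarith, by linarith⟩, by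
        rw [max_eq_right (by linarith), max_eq_left (by linarith), zero_smul, zero_add]⟩
  · rintro ⟨s, hs⟩ ⟨t, ht⟩ hst
    have hcoeff := LinearIndependent.pair_iff.1 hxy
      (max (1 - 2 * s) 0 - max (1 - 2 * t) 0) (max (2 * s - 1) 0 - max (2 * t - 1) 0) (by
        simp only [f] at hst
        rw [sub_smul, sub_smul, sub_add_sub_comm, hst, sub_self])
    have hdiff (u : ℝ) : max (1 - 2 * u) 0 - max (2 * u - 1) 0 = 1 - 2 * u := by
      rw [max_def, max_def]
      split_ifs <;> linarith
    exact Subtype.ext (by linarith [hcoeff.1, hcoeff.2, hdiff s, hdiff t])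

end Arc

section Fan

variable {P : Set ℝ}

/-- The fan over `P`: the union of the segments from the apex `0` to the points `(1, c)` with
`c ∈ P`. -/
def Fan (P : Set ℝ) : Set (ℝ × ℝ) :=
  (fun z : ℝ × ℝ ↦ (z.1, z.1 * z.2)) '' Icc 0 1 ×ˢ P

theorem mem_fan {z : ℝ × ℝ} : z ∈ Fan P ↔ ∃ t ∈ Icc (0 : ℝ) 1, ∃ c ∈ P, (t, t * c) = z := by
  simp only [Fan, mem_image, mem_prod, Prod.exists]
  tauto

theorem isContinuum_fan (hP : IsCompact P) (hne : P.Nonempty) : IsContinuum (Fan P) := by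
  refine ⟨(isCompact_Icc.prod hP).image (by fun_prop), ?_⟩
  have hstar : StarConvex ℝ 0 (Fan P) := by
    rw [starConvex_zero_iff]
    intro z hz a ha₀ ha₁
    obtain ⟨t, ht, c, hc, rfl⟩ := mem_fan.1 hz
    exact mem_fan.2 ⟨a * t, ⟨mul_nonneg ha₀ ht.1, mul_le_one₀ ha₁ ht.1 ht.2⟩, c, hc, by
      simp [mul_assoc]⟩
  have hfan : 0 ∈ Fan P := mem_fan.2 ⟨0, ⟨le_rfl, zero_le_one⟩, _, hne.some_mem, by simp⟩
  exact (hstar.isPathConnected hfan).isConnected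

theorem exists_ray_or_linearIndependent {x y : ℝ × ℝ} (hx : x ∈ Fan P) (hy : y ∈ Fan P) :
    (∃ c a b : ℝ, 0 ≤ a ∧ 0 ≤ b ∧ x = (a, a * c) ∧ y = (b, b * c)) ∨
      LinearIndependent ℝ ![x, y] := by
  obtain ⟨a, ha, c, -, rfl⟩ := mem_fan.1 hx
  obtain ⟨b, hb, d, -, rfl⟩ := mem_fan.1 hy
  by_cases hdet : a = 0 ∨ b = 0 ∨ c = d
  · left
    rcases hdet with rfl | rfl | rfl
    · exact ⟨d, 0, b, le_rfl, hb.1, by simp, rfl⟩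
    · exact ⟨c, a, 0, ha.1, le_rfl, rfl, by simp⟩
    · exact ⟨c, a, b, ha.1, hb.1, rfl, rfl⟩
  · right
    push Not at hdet
    obtain ⟨ha₀, hb₀, hcd⟩ := hdet
    refine LinearIndependent.pair_iff.2 fun u v huv ↦ ?_
    simp only [Prod.smul_mk, smul_eq_mul, Prod.mk_add_mk, Prod.mk_eq_zero] at huv
    have hu : a * (c - d) * u = 0 := by linear_combination huv.2 - d * huv.1
    have hv : b * (d - c) * v = 0 := by linear_combination huv.2 - c * huv.1
    simp_all [sub_eq_zero, eq_comm]

/- The rays of slopes `r₁, r₂ ∉ P` and the vertical segment between them at abscissa `s` bound a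
sector, and `A` does not meet that boundary. -/
theorem subset_sector_of_isPreconnected {A : Set (ℝ × ℝ)} (hAP : A ⊆ Fan P)
    (hA : IsPreconnected A) {r₁ r₂ s : ℝ} (hr₁ : r₁ ∉ P) (hr₂ : r₂ ∉ P) (hs : 0 < s)
    (hcross : ∀ v, r₁ * s < v → v < r₂ * s → (s, v) ∉ A) {x : ℝ × ℝ} (hx : x ∈ A)
    (hxs : s < x.1) (hx₁ : r₁ * x.1 < x.2) (hx₂ : x.2 < r₂ * x.1) :
    ∀ y ∈ A, s < y.1 ∧ r₁ * y.1 < y.2 ∧ y.2 < r₂ * y.1 := by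
  let U : Set (ℝ × ℝ) := {w | s < w.1 ∧ r₁ * w.1 < w.2 ∧ w.2 < r₂ * w.1}
  let V : Set (ℝ × ℝ) := {w | w.1 < s ∨ w.2 < r₁ * w.1 ∨ r₂ * w.1 < w.2}
  have hopen {f g : ℝ × ℝ → ℝ} (hf : Continuous f) (hg : Continuous g) : IsOpen {w | f w < g w} :=
    isOpen_lt hf hg
  have hU : IsOpen U :=
    (hopen continuous_const continuous_fst).inter ((hopen (f := fun w ↦ r₁ * w.1)
      (by fun_prop) continuous_snd).inter
        (hopen (g := fun w ↦ r₂ * w.1) continuous_snd (by fun_prop)))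
  have hV : IsOpen V :=
    (hopen continuous_fst continuous_const).union ((hopen (g := fun w ↦ r₁ * w.1)
      continuous_snd (by fun_prop)).union
        (hopen (f := fun w ↦ r₂ * w.1) (by fun_prop) continuous_snd))
  have hslope {w : ℝ × ℝ} (hw : w ∈ A) (hws : s ≤ w.1) {r : ℝ} (hr : r ∉ P) : w.2 ≠ r * w.1 := by
    obtain ⟨t, -, c, hc, rfl⟩ := mem_fan.1 (hAP hw)
    rintro h
    rw [mul_comm r] at h
    exact hr (mul_left_cancel₀ (hs.trans_le hws).ne' h ▸ hc)
  have hdisj : Disjoint U V := by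
    rw [Set.disjoint_left]
    rintro w ⟨h₀, h₁, h₂⟩ (h | h | h) <;> linarith
  have hcov : A ⊆ U ∪ V := fun w hw ↦ or_iff_not_imp_right.2 fun hwV ↦ by
    simp only [V, mem_ofPred_eq, not_or, not_lt] at hwV
    obtain ⟨h₀, h₁, h₂⟩ := hwV
    have hw₁ : r₁ * w.1 < w.2 := h₁.lt_of_ne (hslope hw h₀ hr₁).symm
    have hw₂ : w.2 < r₂ * w.1 := h₂.lt_of_ne (hslope hw h₀ hr₂)
    refine ⟨h₀.lt_of_ne ?_, hw₁, hw₂⟩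
    rintro rfl
    exact hcross w.2 hw₁ hw₂ hw
  exact hA.subset_left_of_subset_union hU hV hdisj hcov ⟨x, hx, hxs, hx₁, hx₂⟩

theorem eq_mul_of_ray_point_notMem (hP : Dense Pᶜ) {A : Set (ℝ × ℝ)} (hAP : A ⊆ Fan P)
    (hAc : IsClosed A) (hA : IsPreconnected A) {s t c : ℝ} (hs : 0 < s) (hst : s < t)
    (ht : (t, t * c) ∈ A) (hsA : (s, s * c) ∉ A) :
    ∀ y ∈ A, s < y.1 ∧ y.2 = y.1 * c := by
  obtain ⟨ε, hε, hball⟩ := Metric.isOpen_iff.1 hAc.isOpen_compl _ hsA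
  have hsector (δ : ℝ) (hδ : 0 < δ) (y) (hy : y ∈ A) : s < y.1 ∧ |y.2 - y.1 * c| < δ * y.1 := by
    set η := min δ (ε / s)
    have hη : 0 < η := lt_min hδ (div_pos hε hs)
    have hηs : η * s ≤ ε := (le_div_iff₀ hs).1 (min_le_right _ _)
    obtain ⟨r₁, hr₁, hr₁c⟩ := hP.exists_between (sub_lt_self c hη)
    obtain ⟨r₂, hr₂, hr₂c⟩ := hP.exists_between (lt_add_of_pos_right c hη)
    have hcross (v : ℝ) (hv₁ : r₁ * s < v) (hv₂ : v < r₂ * s) : (s, v) ∉ A := by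
      refine hball ?_
      simp only [mem_ball, Prod.dist_eq, dist_self, Real.dist_eq, max_lt_iff, abs_lt]
      exact ⟨hε, by nlinarith [hr₁c.1], by nlinarith [hr₂c.2]⟩
    obtain ⟨hys, hy₁, hy₂⟩ := subset_sector_of_isPreconnected hAP hA hr₁ hr₂ hs hcross ht hst
      (by nlinarith [hr₁c.2]) (by nlinarith [hr₂c.1]) y hy
    refine ⟨hys, abs_lt.2 ⟨?_, ?_⟩⟩ <;>
      nlinarith [min_le_left δ (ε / s), hr₁c.1, hr₂c.2, hs.trans hys]
  intro y hy
  have hys := (hsector 1 one_pos y hy).1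
  have hy₀ : 0 < y.1 := hs.trans hys
  refine ⟨hys, eq_of_abs_sub_le_all fun δ hδ ↦ ?_⟩
  simpa [div_mul_cancel₀ _ hy₀.ne'] using (hsector (δ / y.1) (div_pos hδ hy₀) y hy).2.le

theorem segment_subset_of_ray (hP : Dense Pᶜ) {A : Set (ℝ × ℝ)} (hAP : A ⊆ Fan P)
    (hAc : IsClosed A) (hA : IsPreconnected A) {a b c : ℝ} (ha : 0 ≤ a) (hab : a ≤ b)
    (haA : (a, a * c) ∈ A) (hbA : (b, b * c) ∈ A) :
    segment ℝ (a, a * c) (b, b * c) ⊆ A := by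
  rw [segment_eq_image']
  rintro _ ⟨σ, ⟨hσ₀, hσ₁⟩, rfl⟩
  have hpoint : (a, a * c) + σ • ((b, b * c) - (a, a * c)) =
      (a + σ * (b - a), (a + σ * (b - a)) * c) := by
    ext <;> simp
    ring
  simp only [hpoint]
  rcases eq_or_lt_of_le (by nlinarith : a ≤ a + σ * (b - a)) with has | has
  · rwa [← has]
  rcases eq_or_lt_of_le (by nlinarith : a + σ * (b - a) ≤ b) with hbs | hbs
  · rwa [hbs]
  by_contra hs
  exact has.not_gt
    (eq_mul_of_ray_point_notMem hP hAP hAc hA (ha.trans_lt has) hbs hbA hs _ haA).1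

theorem segment_zero_subset_of_linearIndependent (hP : Dense Pᶜ) {A : Set (ℝ × ℝ)}
    (hAP : A ⊆ Fan P) (hAc : IsClosed A) (hA : IsPreconnected A) {x y : ℝ × ℝ} (hx : x ∈ A)
    (hy : y ∈ A) (hxy : LinearIndependent ℝ ![x, y]) : segment ℝ 0 x ⊆ A := by
  obtain ⟨t, ⟨ht, -⟩, c, -, rfl⟩ := mem_fan.1 (hAP hx)
  have htpos : 0 < t := ht.lt_of_ne (by rintro rfl; exact hxy.ne_zero 0 (by simp))
  have hopen : Ioo (0 : ℝ) 1 ⊆ (fun σ : ℝ ↦ σ • (t, t * c)) ⁻¹' A := by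
    rintro σ ⟨hσ₀, hσ₁⟩
    by_contra hσ
    obtain ⟨-, hslope⟩ := eq_mul_of_ray_point_notMem hP hAP hAc hA (mul_pos hσ₀ htpos)
      (mul_lt_of_lt_one_left htpos hσ₁) hx (by simpa [mul_assoc] using hσ) y hy
    refine htpos.ne' (neg_eq_zero.1 (LinearIndependent.pair_iff.1 hxy y.1 (-t) ?_).2)
    ext <;> simp [hslope] <;> ring
  have hcont : Continuous fun σ : ℝ ↦ σ • (t, t * c) := by fun_prop
  have hclosed := (hAc.preimage hcont).closure_subset_iff.2 hopen
  rw [closure_Ioo zero_ne_one] at hclosed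
  rw [segment_eq_image']
  rintro _ ⟨σ, hσ, rfl⟩
  simpa using hclosed hσ

theorem isDendroid_fan (hcompact : IsCompact P) (hne : P.Nonempty) (hP : Dense Pᶜ) :
    IsDendroid (Fan P) := by
  refine isDendroid_of_forall_exists_arc_subset (isContinuum_fan hcompact hne)
    fun x hx y hy hxy ↦ ?_
  rcases exists_ray_or_linearIndependent hx hy with ⟨c, a, b, ha, hb, rfl, rfl⟩ | hind
  · refine ⟨_, isArc_segment hxy, fun A hAP hAc hA hxA hyA ↦ ?_⟩
    rcases le_total a b with hab | hab
    · exact segment_subset_of_ray hP hAP hAc hA ha hab hxA hyA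
    · rw [segment_symm]
      exact segment_subset_of_ray hP hAP hAc hA hb hab hyA hxA
  · obtain ⟨T, hTsub, hT⟩ := exists_isArc_subset_segment_union_segment hind
    exact ⟨T, hT, fun A hAP hAc hA hxA hyA ↦ hTsub.trans (union_subset
      (segment_zero_subset_of_linearIndependent hP hAP hAc hA hxA hyA hind)
      (segment_zero_subset_of_linearIndependent hP hAP hAc hA hyA hxA
        (LinearIndependent.pair_symm_iff.1 hind)))⟩

end Fan

/-! ### Infinite compositions of pushes with priorities -/

section Pushes

open Filter
open scoped NNReal Topology

/-- The first stage after the last stage before `s` at which a priority `< n` acted; here `k t`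
is the priority acting at stage `t`. -/
def lastReset (k : ℕ → ℕ) : ℕ → ℕ → ℕ
  | 0, _ => 0
  | s + 1, n => if k s < n then s + 1 else lastReset k s n

/-- The exponent of the radius around the origin that priority `n` reserves at stage `s`, when the
composition of the first `t` maps is `2 ^ F t`-bi-Lipschitz. -/
def radiusExponent (k F : ℕ → ℕ) (s n : ℕ) : ℕ := F (lastReset k s n) + 3 * n

/-- Bi-Lipschitz bijections `push s` of a normed group, the `s`-th one moving only points in the
ball reserved at stage `s` by its priority, and moving the next smaller reserved ball away from
the origin. -/
structure PushSystem (E : Type*) [NormedAddCommGroup E] where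
  priority : ℕ → ℕ
  exponent : ℕ → ℕ
  push : ℕ → E → E
  priority_injective : Function.Injective priority
  surjective_push : ∀ s, Function.Surjective (push s)
  exists_biLipschitz_push : ∀ s, ∃ L, L + exponent s ≤ exponent (s + 1) ∧
    LipschitzWith (2 ^ L) (push s) ∧ AntilipschitzWith (2 ^ L) (push s)
  push_eq_self : ∀ s z, 2⁻¹ ^ radiusExponent priority exponent s (priority s) < ‖z‖ → push s z = z
  le_norm_push : ∀ s z, ‖z‖ ≤ 2⁻¹ ^ radiusExponent priority exponent s (priority s + 1) →
    2⁻¹ ^ exponent (s + 1) ≤ ‖push s z‖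

theorem antilipschitzWith_mono {α β : Type*} [PseudoEMetricSpace α] [PseudoEMetricSpace β]
    {K L : ℝ≥0} {f : α → β} (hf : AntilipschitzWith K f) (hKL : K ≤ L) : AntilipschitzWith L f :=
  fun x y ↦ (hf x y).trans (by gcongr)

theorem lastReset_le (k : ℕ → ℕ) (s n : ℕ) : lastReset k s n ≤ s := by
  induction s with
  | zero => exact le_rfl
  | succ s ih =>
    rw [lastReset]
    split_ifs <;> omega

theorem lastReset_mono (k : ℕ → ℕ) (s : ℕ) : Monotone (lastReset k s) := by
  intro m n hmn
  induction s with
  | zero => exact le_rfl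
  | succ s ih =>
    have := lastReset_le k s m
    simp only [lastReset]
    split_ifs <;> omega

theorem computable_lastReset {k : ℕ → ℕ} (hk : Computable k) :
    Computable fun p : ℕ × ℕ ↦ lastReset k p.1 p.2 := by
  have hs : Computable fun r : (ℕ × ℕ) × (ℕ × ℕ) ↦ r.2.1 := Computable.fst.comp Computable.snd
  have hlt : ComputablePred fun r : (ℕ × ℕ) × (ℕ × ℕ) ↦ k r.2.1 < r.1.2 :=
    computablePred_comp (p := fun r : ℕ × ℕ ↦ r.1 < r.2) Primrec.nat_lt.computablePred
      ((hk.comp hs).pair (Computable.snd.comp Computable.fst))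
  have hstep : Computable₂ fun (p r : ℕ × ℕ) ↦ if k r.1 < p.2 then r.1 + 1 else r.2 :=
    computable_ite hlt (Computable.succ.comp hs) (Computable.snd.comp Computable.snd)
  refine (Computable.nat_rec Computable.fst (Computable.const 0) hstep).of_eq fun p ↦ ?_
  induction p.1 with
  | zero => rfl
  | succ s ih => rw [lastReset, ← ih]

theorem computable_radiusExponent {k F : ℕ → ℕ} (hk : Computable k) (hF : Computable F) :
    Computable fun p : ℕ × ℕ ↦ radiusExponent k F p.1 p.2 :=
  computable_nat_add (hF.comp (computable_lastReset hk))
    (computable_nat_mul (Computable.const 3) Computable.snd)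

namespace PushSystem

variable {E : Type*} [NormedAddCommGroup E] (S : PushSystem E) {m n s t : ℕ} {x y : E}

/-- The map obtained after the first `s` pushes. -/
def stageMap (s : ℕ) : E → E := composeUpTo S.push s

/-- The radius that priority `n` reserves at stage `s`. -/
noncomputable def radius (s n : ℕ) : ℝ := 2⁻¹ ^ radiusExponent S.priority S.exponent s n

/-- No priority below `n` acts at stage `s` or later. -/
def Settled (n s : ℕ) : Prop := ∀ t ≥ s, n ≤ S.priority t

theorem stageMap_succ (s : ℕ) (x : E) : S.stageMap (s + 1) x = S.push s (S.stageMap s x) := rfl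

theorem exponent_mono : Monotone S.exponent := monotone_nat_of_le_succ fun s ↦ by
  obtain ⟨L, hL, -⟩ := S.exists_biLipschitz_push s
  omega

theorem push_injective (s : ℕ) : Function.Injective (S.push s) := by
  obtain ⟨L, -, -, hanti⟩ := S.exists_biLipschitz_push s
  exact hanti.injective

theorem biLipschitz_stageMap (s : ℕ) :
    LipschitzWith (2 ^ S.exponent s) (S.stageMap s) ∧
      AntilipschitzWith (2 ^ S.exponent s) (S.stageMap s) := by
  induction s with
  | zero =>
    have hone : (1 : ℝ≥0) ≤ 2 ^ S.exponent 0 := one_le_pow₀ one_le_two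
    exact ⟨LipschitzWith.id.weaken hone, antilipschitzWith_mono .id hone⟩
  | succ s ih =>
    obtain ⟨L, hL, hlip, hanti⟩ := S.exists_biLipschitz_push s
    have hexp : (2 : ℝ≥0) ^ L * 2 ^ S.exponent s ≤ 2 ^ S.exponent (s + 1) := by
      rw [← pow_add]
      exact pow_le_pow_right₀ one_le_two hL
    refine ⟨(hlip.comp ih.1).weaken hexp, antilipschitzWith_mono (hanti.comp ih.2) ?_⟩
    rwa [mul_comm]

theorem continuous_stageMap (s : ℕ) : Continuous (S.stageMap s) :=
  (S.biLipschitz_stageMap s).1.continuous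

theorem stageMap_injective (s : ℕ) : Function.Injective (S.stageMap s) :=
  (S.biLipschitz_stageMap s).2.injective

theorem stageMap_surjective (s : ℕ) : Function.Surjective (S.stageMap s) := by
  induction s with
  | zero => exact Function.surjective_id
  | succ s ih => exact (S.surjective_push s).comp ih

theorem radius_pos : 0 < S.radius s n := by
  rw [radius]
  positivity

theorem radius_le_half_pow : S.radius s n ≤ 2⁻¹ ^ n :=
  pow_le_pow_of_le_one (by norm_num) (by norm_num) (by rw [radiusExponent]; omega)

theorem radius_anti (s : ℕ) : Antitone (S.radius s) := fun m n hmn ↦ by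
  refine pow_le_pow_of_le_one (by norm_num) (by norm_num) ?_
  have := S.exponent_mono (lastReset_mono S.priority s hmn)
  simp only [radiusExponent]
  omega

theorem radius_succ_lt : S.radius s (n + 1) < S.radius s n := by
  refine pow_lt_pow_right_of_lt_one₀ (by norm_num) (by norm_num) ?_
  have := S.exponent_mono (lastReset_mono S.priority s n.le_succ)
  simp only [radiusExponent, Nat.succ_eq_add_one] at this ⊢
  omega

theorem radius_stage_succ (hn : n ≤ S.priority s) : S.radius (s + 1) n = S.radius s n := by
  simp only [radius, radiusExponent, lastReset, if_neg hn.not_gt]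

theorem norm_push_le_iff (hn : n ≤ S.priority s) :
    ‖S.push s x‖ ≤ S.radius (s + 1) n ↔ ‖x‖ ≤ S.radius s n := by
  rw [S.radius_stage_succ hn]
  have hfix (z : E) (hz : S.radius s n < ‖z‖) : S.push s z = z :=
    S.push_eq_self s z ((S.radius_anti s hn).trans_lt hz)
  constructor <;> intro h <;> by_contra! hlt
  · exact hlt.not_ge (hfix x hlt ▸ h)
  · rw [S.push_injective s (hfix _ hlt)] at hlt
    exact hlt.not_ge h

theorem norm_stageMap_le_iff (hst : s ≤ t) (hn : ∀ u, s ≤ u → u < t → n ≤ S.priority u) :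
    ‖S.stageMap t x‖ ≤ S.radius t n ↔ ‖S.stageMap s x‖ ≤ S.radius s n := by
  induction t, hst using Nat.le_induction with
  | base => rfl
  | succ t hst ih =>
    rw [stageMap_succ, S.norm_push_le_iff (hn t hst t.lt_succ_self),
      ih fun u hsu hut ↦ hn u hsu (hut.trans t.lt_succ_self)]

variable {S} in
theorem Settled.mono (h : S.Settled n s) (hst : s ≤ t) (hmn : m ≤ n) : S.Settled m t :=
  fun u hu ↦ hmn.trans (h u (hst.trans hu))

/- Before the least settled stage a smaller priority acted, and that is what resets the radius. -/
theorem exists_settled_lastReset_eq (n : ℕ) :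
    ∃ s, S.Settled n s ∧ lastReset S.priority s n = s := by
  classical
  have hex : ∃ s, S.Settled n s :=
    eventually_atTop.1 (S.priority_injective.nat_tendsto_atTop.eventually_ge_atTop n)
  refine ⟨Nat.find hex, Nat.find_spec hex, ?_⟩
  rcases hs : Nat.find hex with _ | s
  · rfl
  have hact : S.priority s < n := by
    by_contra! hle
    refine Nat.find_min hex (by omega : s < _) fun t ht ↦ ?_
    rcases ht.eq_or_lt with rfl | hlt
    · exact hle
    · exact (hs ▸ Nat.find_spec hex : S.Settled n (s + 1)) t hlt
  exact if_pos hact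

theorem exists_settled (n : ℕ) : ∃ s, S.Settled n s :=
  (S.exists_settled_lastReset_eq n).imp fun _ h ↦ h.1

/-- The points that end up in the ball reserved by priority `n`. -/
def cell (n : ℕ) : Set E := {x | ∃ s, S.Settled n s ∧ ‖S.stageMap s x‖ ≤ S.radius s n}

variable {S} in
theorem Settled.mem_cell_iff (hs : S.Settled n s) :
    x ∈ S.cell n ↔ ‖S.stageMap s x‖ ≤ S.radius s n := by
  refine ⟨fun ⟨t, ht, hx⟩ ↦ ?_, fun hx ↦ ⟨s, hs, hx⟩⟩
  rcases le_total s t with hst | hts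
  · exact (S.norm_stageMap_le_iff hst fun u hu _ ↦ hs u hu).1 hx
  · exact (S.norm_stageMap_le_iff hts fun u hu _ ↦ ht u hu).2 hx

theorem isClosed_cell (n : ℕ) : IsClosed (S.cell n) := by
  obtain ⟨s, hs⟩ := S.exists_settled n
  simp only [Set.ext fun _ ↦ hs.mem_cell_iff]
  exact isClosed_le (S.continuous_stageMap s).norm continuous_const

theorem cell_nonempty (n : ℕ) : (S.cell n).Nonempty := by
  obtain ⟨s, hs⟩ := S.exists_settled n
  obtain ⟨x, hx⟩ := S.stageMap_surjective s 0
  exact ⟨x, hs.mem_cell_iff.2 (by simpa [hx] using S.radius_pos.le)⟩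

theorem cell_anti : Antitone S.cell := antitone_nat_of_succ_le fun n _ ⟨s, hs, hx⟩ ↦
  ⟨s, hs.mono le_rfl n.le_succ, hx.trans S.radius_succ_lt.le⟩

theorem dist_le_of_mem_cell (hx : x ∈ S.cell n) (hy : y ∈ S.cell n) :
    dist x y ≤ 2 * 2⁻¹ ^ n := by
  obtain ⟨s, hs, hreset⟩ := S.exists_settled_lastReset_eq n
  rw [hs.mem_cell_iff] at hx hy
  have hradius : 2 ^ S.exponent s * S.radius s n ≤ 2⁻¹ ^ n := by
    rw [radius, radiusExponent, hreset, pow_add, ← mul_assoc, ← mul_pow]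
    norm_num
    exact pow_le_pow_of_le_one (by norm_num) (by norm_num) (by omega)
  calc dist x y ≤ 2 ^ S.exponent s * dist (S.stageMap s x) (S.stageMap s y) := by
        simpa using (S.biLipschitz_stageMap s).2.le_mul_dist x y
    _ ≤ 2 ^ S.exponent s * (S.radius s n + S.radius s n) := by
        gcongr
        exact (dist_le_norm_add_norm _ _).trans (add_le_add hx hy)
    _ ≤ 2 * 2⁻¹ ^ n := by linarith

theorem cell_zero : S.cell 0 = closedBall 0 (S.radius 0 0) := by
  have hsettled : S.Settled 0 0 := fun _ _ ↦ Nat.zero_le _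
  ext x
  rw [hsettled.mem_cell_iff, mem_closedBall_zero_iff]
  rfl

theorem eq_of_forall_mem_cell (hx : ∀ n, x ∈ S.cell n) (hy : ∀ n, y ∈ S.cell n) : x = y := by
  refine dist_le_zero.1 (le_of_forall_pos_lt_add fun ε hε ↦ ?_)
  obtain ⟨n, hn⟩ := (eventually_mul_half_pow_lt 2 hε).exists
  rw [zero_add]
  exact (S.dist_le_of_mem_cell (hx n) (hy n)).trans_lt hn

theorem tendsto_of_mem_cell (hx : ∀ n, x ∈ S.cell n) :
    Tendsto (S.stageMap · x) atTop (𝓝 0) := by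
  refine Metric.tendsto_atTop.2 fun ε hε ↦ ?_
  obtain ⟨n, hn⟩ := (eventually_mul_half_pow_lt 1 hε).exists
  obtain ⟨s, hs⟩ := S.exists_settled n
  refine ⟨s, fun t ht ↦ ?_⟩
  rw [dist_zero_right]
  calc ‖S.stageMap t x‖ ≤ S.radius t n := (hs.mono ht le_rfl).mem_cell_iff.1 (hx n)
    _ ≤ 2⁻¹ ^ n := S.radius_le_half_pow
    _ < ε := by simpa using hn

variable {S} in
theorem Settled.stageMap_eq (hs : S.Settled n s) (hx : x ∉ S.cell n) (hst : s ≤ t) :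
    S.stageMap t x = S.stageMap s x := by
  induction t, hst using Nat.le_induction with
  | base => rfl
  | succ t hst ih =>
    have hlarge : S.radius t n < ‖S.stageMap t x‖ :=
      not_le.1 fun h ↦ hx ((hs.mono hst le_rfl).mem_cell_iff.2 h)
    rw [stageMap_succ, ← ih]
    exact S.push_eq_self t _ ((S.radius_anti t (hs t hst)).trans_lt hlarge)

variable {S} in
theorem Settled.tendsto_stageMap (hs : S.Settled n s) (hx : x ∉ S.cell n) :
    Tendsto (S.stageMap · x) atTop (𝓝 (S.stageMap s x)) :=
  tendsto_const_nhds.congr' <| (eventually_ge_atTop s).mono fun _ ht ↦ (hs.stageMap_eq hx ht).symm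

/-- The pointwise limit of the stage maps. -/
noncomputable def limitMap (x : E) : E := limUnder atTop (S.stageMap · x)

theorem tendsto_limitMap (x : E) : Tendsto (S.stageMap · x) atTop (𝓝 (S.limitMap x)) := by
  refine tendsto_nhds_limUnder ?_
  by_cases hx : ∀ n, x ∈ S.cell n
  · exact ⟨0, S.tendsto_of_mem_cell hx⟩
  · push Not at hx
    obtain ⟨n, hn⟩ := hx
    obtain ⟨s, hs⟩ := S.exists_settled n
    exact ⟨_, hs.tendsto_stageMap hn⟩

variable {S} in
theorem Settled.limitMap_eq (hs : S.Settled n s) (hx : x ∉ S.cell n) :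
    S.limitMap x = S.stageMap s x :=
  tendsto_nhds_unique (S.tendsto_limitMap x) (hs.tendsto_stageMap hx)

theorem limitMap_eq_zero_iff : S.limitMap x = 0 ↔ ∀ n, x ∈ S.cell n := by
  refine ⟨fun hx n ↦ ?_, fun hx ↦
    tendsto_nhds_unique (S.tendsto_limitMap x) (S.tendsto_of_mem_cell hx)⟩
  by_contra hn
  obtain ⟨s, hs⟩ := S.exists_settled n
  rw [hs.limitMap_eq hn] at hx
  exact hn (hs.mem_cell_iff.2 (by simpa [hx] using S.radius_pos.le))

theorem exists_limitMap_eq_stageMap (hx : S.limitMap x ≠ 0) :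
    ∃ s, S.limitMap x = S.stageMap s x := by
  rw [Ne, limitMap_eq_zero_iff, not_forall] at hx
  obtain ⟨n, hn⟩ := hx
  obtain ⟨s, hs⟩ := S.exists_settled n
  exact ⟨s, hs.limitMap_eq hn⟩

theorem limitMap_injective : Function.Injective S.limitMap := fun x y hxy ↦ by
  by_cases hx : S.limitMap x = 0
  · exact S.eq_of_forall_mem_cell (S.limitMap_eq_zero_iff.1 hx)
      (S.limitMap_eq_zero_iff.1 (hxy ▸ hx))
  have hy : S.limitMap y ≠ 0 := hxy ▸ hx
  rw [limitMap_eq_zero_iff, not_forall] at hx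
  rw [Ne, limitMap_eq_zero_iff, not_forall] at hy
  obtain ⟨⟨m, hm⟩, ⟨n, hn⟩⟩ := And.intro hx hy
  obtain ⟨s, hs⟩ := S.exists_settled (max m n)
  rw [hs.limitMap_eq fun h ↦ hm (S.cell_anti (le_max_left m n) h),
    hs.limitMap_eq fun h ↦ hn (S.cell_anti (le_max_right m n) h)] at hxy
  exact S.stageMap_injective s hxy

theorem forall_stageMap_mem_iff {V : ℕ → Set E} (hV : Antitone V) (hclosed : ∀ s, IsClosed (V s))
    (hfix : ∀ s, ∀ z ∉ V s, S.push s z = z) :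
    (∀ s, S.stageMap s x ∈ V s) ↔ ∀ s, S.limitMap x ∈ V s := by
  refine ⟨fun hx s ↦ ?_, fun hx s ↦ ?_⟩
  · exact (hclosed s).mem_of_tendsto (S.tendsto_limitMap x)
      ((eventually_ge_atTop s).mono fun t ht ↦ hV ht (hx t))
  · by_contra hs
    have hconst (t : ℕ) (ht : s ≤ t) : S.stageMap t x = S.stageMap s x := by
      induction t, ht using Nat.le_induction with
      | base => rfl
      | succ t ht ih =>
        rw [stageMap_succ, ih]
        exact hfix t _ fun h ↦ hs (hV ht h)
    have hlimit : S.limitMap x = S.stageMap s x := tendsto_nhds_unique (S.tendsto_limitMap x)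
      (tendsto_const_nhds.congr' <| (eventually_ge_atTop s).mono fun t ht ↦ (hconst t ht).symm)
    exact hs (hlimit ▸ hx s)

variable {S} in
theorem Settled.of_norm_stageMap_le (hx : S.limitMap x = 0)
    (hn : ‖S.stageMap s x‖ ≤ S.radius s n) : S.Settled n s := by
  by_contra hnot
  simp only [Settled, not_forall, not_le, exists_prop] at hnot
  obtain ⟨u, hsu, hun⟩ := hnot
  -- Let the least priority acting from stage `s` on act at stage `t`.
  obtain ⟨t, hst, hmin⟩ := exists_minimalFor_of_wellFoundedLT (s ≤ ·) S.priority ⟨u, hsu⟩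
  have hother (v : ℕ) (hsv : s ≤ v) (hvt : v ≠ t) : S.priority t + 1 ≤ S.priority v := by
    refine Nat.lt_of_le_of_ne ?_ (S.priority_injective.ne hvt.symm)
    exact (le_total _ _).elim id fun h ↦ hmin hsv h
  have hnear : ‖S.stageMap t x‖ ≤ S.radius t (S.priority t + 1) := by
    rw [S.norm_stageMap_le_iff hst fun v hsv hvt ↦ hother v hsv hvt.ne]
    have hle : S.priority t ≤ S.priority u := (le_total _ _).elim id fun h ↦ hmin hsu h
    exact hn.trans (S.radius_anti s (by omega))
  have hsettled : S.Settled (S.priority t + 1) (t + 1) := fun v hv ↦ hother v (by omega) (by omega)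
  have hback : ‖S.stageMap (t + 1) x‖ ≤ S.radius (t + 1) (S.priority t + 1) :=
    hsettled.mem_cell_iff.1 (S.limitMap_eq_zero_iff.1 hx _)
  have hsmall : S.radius (t + 1) (S.priority t + 1) < 2⁻¹ ^ S.exponent (t + 1) := by
    refine pow_lt_pow_right_of_lt_one₀ (by norm_num) (by norm_num) ?_
    simp only [radiusExponent, lastReset, if_pos (Nat.lt_succ_self _)]
    omega
  exact absurd (S.le_norm_push t _ hnear) (hback.trans_lt hsmall).not_ge

theorem exists_norm_stageMap_lt (hx : S.limitMap x = 0) (n : ℕ) :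
    ∃ s, ‖S.stageMap s x‖ < S.radius s n := by
  obtain ⟨s, hs⟩ := S.exists_settled (n + 1)
  exact ⟨s, (hs.mem_cell_iff.1 (S.limitMap_eq_zero_iff.1 hx _)).trans_lt S.radius_succ_lt⟩

theorem continuous_limitMap : Continuous S.limitMap := by
  refine continuous_iff_continuousAt.2 fun x ↦ ?_
  by_cases hx : S.limitMap x = 0
  · refine Metric.tendsto_nhds.2 fun ε hε ↦ ?_
    obtain ⟨n, hn⟩ := (eventually_mul_half_pow_lt 1 hε).exists
    obtain ⟨s, hs⟩ := S.exists_norm_stageMap_lt hx n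
    have hsettled : S.Settled n s := .of_norm_stageMap_le hx hs.le
    have hopen : IsOpen {y | ‖S.stageMap s y‖ < S.radius s n} :=
      isOpen_lt (S.continuous_stageMap s).norm continuous_const
    filter_upwards [hopen.mem_nhds hs] with y hy
    have hbound : ∀ᶠ t in atTop, ‖S.stageMap t y‖ ≤ 2⁻¹ ^ n :=
      (eventually_ge_atTop s).mono fun t ht ↦
        ((S.norm_stageMap_le_iff ht fun u hu _ ↦ hsettled u hu).2 hy.le).trans
          S.radius_le_half_pow
    rw [hx, dist_zero_right]
    exact (le_of_tendsto (S.tendsto_limitMap y).norm hbound).trans_lt (by simpa using hn)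
  · rw [limitMap_eq_zero_iff, not_forall] at hx
    obtain ⟨n, hn⟩ := hx
    obtain ⟨s, hs⟩ := S.exists_settled n
    refine (S.continuous_stageMap s).continuousAt.congr ?_
    filter_upwards [(S.isClosed_cell n).isOpen_compl.mem_nhds hn] with y hy
    exact (hs.limitMap_eq hy).symm

variable [ProperSpace E]

theorem exists_limitMap_eq_zero : ∃ x, S.limitMap x = 0 := by
  have hcompact : IsCompact (S.cell 0) := S.cell_zero ▸ isCompact_closedBall _ _
  obtain ⟨x, hx⟩ := IsCompact.nonempty_iInter_of_sequence_nonempty_isCompact_isClosed S.cell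
    (fun n ↦ S.cell_anti n.le_succ) S.cell_nonempty hcompact S.isClosed_cell
  exact ⟨x, S.limitMap_eq_zero_iff.2 (mem_iInter.1 hx)⟩

theorem limitMap_surjective : Function.Surjective S.limitMap := fun z ↦ by
  rcases eq_or_ne z 0 with rfl | hz
  · exact S.exists_limitMap_eq_zero
  obtain ⟨n, hn⟩ := (eventually_mul_half_pow_lt 1 (norm_pos_iff.2 hz)).exists
  obtain ⟨s, hs⟩ := S.exists_settled n
  obtain ⟨x, rfl⟩ := S.stageMap_surjective s z
  refine ⟨x, hs.limitMap_eq fun hx ↦ ?_⟩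
  have hle := (hs.mem_cell_iff.1 hx).trans S.radius_le_half_pow
  linarith

theorem isClosedMap_limitMap : IsClosedMap S.limitMap := by
  refine (isProperMap_iff_tendsto_cocompact.2 ⟨S.continuous_limitMap, ?_⟩).isClosedMap
  have hsettled : S.Settled 0 0 := fun _ _ ↦ Nat.zero_le _
  refine tendsto_id.congr' ?_
  filter_upwards [(isCompact_closedBall (0 : E) (S.radius 0 0)).compl_mem_cocompact] with x hx
  exact (hsettled.limitMap_eq (S.cell_zero ▸ hx)).symm

/-- The limit map as a homeomorphism. -/
noncomputable def limitHomeomorph : E ≃ₜ E :=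
  (Equiv.ofBijective S.limitMap ⟨S.limitMap_injective, S.limitMap_surjective⟩)
    |>.toHomeomorphOfContinuousClosed S.continuous_limitMap S.isClosedMap_limitMap

end PushSystem

end Pushes

/-! ### A push along a wedge -/

section WedgePush

open scoped NNReal

variable {κ ρ ν c μ : ℝ} {z : ℝ × ℝ}

theorem norm_le_iff_abs_le {r : ℝ} : ‖z‖ ≤ r ↔ |z.1| ≤ r ∧ |z.2| ≤ r := by
  simp only [Prod.norm_def, max_le_iff, Real.norm_eq_abs]

/-- The distance by which `slide` moves a point to the left. It is `ρ` at `(ρ, 0)`, its slope in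
the first coordinate is at most `1 - κ`, and it vanishes outside a neighbourhood of `[0, 2ρ]` whose
height is of order `ρ / ν`. -/
noncomputable def slideLength (κ ρ ν : ℝ) (z : ℝ × ℝ) : ℝ :=
  max 0 (min (z.1 + κ * (ρ - z.1)) (min (2 * ρ - z.1) (ρ - ν * |z.2|)))

/-- A homeomorphism of the plane moving points horizontally, and `(ρ, 0)` to the origin. -/
noncomputable def slide (κ ρ ν : ℝ) (z : ℝ × ℝ) : ℝ × ℝ := (z.1 - slideLength κ ρ ν z, z.2)

/-- The shear taking the horizontal axis to the line of slope `c`. -/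
def shear (c : ℝ) (z : ℝ × ℝ) : ℝ × ℝ := (z.1, z.2 + c * z.1)

/-- The conjugate of `slide` along the line of slope `c`, moving `(ρ, c * ρ)` to the origin. -/
noncomputable def wedgePush (κ ρ ν c : ℝ) : ℝ × ℝ → ℝ × ℝ := shear c ∘ slide κ ρ ν ∘ shear (-c)

theorem slideLength_nonneg : 0 ≤ slideLength κ ρ ν z := le_max_left _ _

theorem slideLength_le (hρ : 0 ≤ ρ) (hν : 0 ≤ ν) : slideLength κ ρ ν z ≤ ρ := by
  refine max_le hρ ((min_le_right _ _).trans ((min_le_right _ _).trans ?_))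
  linarith [mul_nonneg hν (abs_nonneg z.2)]

theorem slideLength_le_add {w : ℝ × ℝ} {d : ℝ} (hd : 0 ≤ d) (hleft : (1 - κ) * (z.1 - w.1) ≤ d)
    (hright : w.1 - z.1 ≤ d) (hheight : ν * (|w.2| - |z.2|) ≤ d) :
    slideLength κ ρ ν z ≤ slideLength κ ρ ν w + d := by
  simp only [slideLength, ← max_add_add_right, ← min_add_add_right]
  exact max_le_max (by linarith)
    (min_le_min (by linarith) (min_le_min (by linarith) (by linarith)))

theorem lipschitzWith_slide (hκ₀ : 0 ≤ κ) (hκ₁ : κ ≤ 1) (hν : 1 ≤ ν) {K : ℝ≥0} (hK : 2 * ν ≤ K) :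
    LipschitzWith K (slide κ ρ ν) := by
  have hlength (z w : ℝ × ℝ) : slideLength κ ρ ν z ≤ slideLength κ ρ ν w + ν * dist z w := by
    obtain ⟨h₁, h₂⟩ := max_le_iff.1 (Prod.dist_eq (x := z) (y := w)).ge
    rw [Real.dist_eq] at h₁ h₂
    have hdist : dist z w ≤ ν * dist z w := le_mul_of_one_le_left dist_nonneg hν
    refine slideLength_le_add (dist_nonneg.trans hdist) ?_ ?_ ?_
    · nlinarith [abs_le.1 h₁, dist_nonneg (x := z) (y := w)]
    · linarith [(abs_le.1 h₁).1]
    · gcongr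
      linarith [abs_sub_abs_le_abs_sub w.2 z.2, abs_sub_comm z.2 w.2]
  refine LipschitzWith.of_dist_le_mul fun z w ↦ ?_
  have hzw := hlength z w
  have hwz := hlength w z
  rw [dist_comm w z] at hwz
  obtain ⟨h₁, h₂⟩ := max_le_iff.1 (Prod.dist_eq (x := z) (y := w)).ge
  have hdist : 2 * ν * dist z w ≤ K * dist z w := by gcongr
  have hdist' : dist z w ≤ ν * dist z w := le_mul_of_one_le_left dist_nonneg hν
  rw [Real.dist_eq, abs_le] at h₁
  refine max_le ?_ (h₂.trans (by linarith [dist_nonneg (x := z) (y := w)]))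
  rw [Real.dist_eq, abs_le]
  simp only [slide]
  constructor <;> linarith

/- On a horizontal line the slope of the first coordinate of `slide` is at least `κ`. -/
theorem mul_sub_le_slide (hκ : κ ≤ 1) (hν : 0 ≤ ν) {w : ℝ × ℝ} (hwz : w.1 ≤ z.1) :
    κ * (z.1 - w.1) ≤ (slide κ ρ ν z).1 - (slide κ ρ ν w).1 + ν * |z.2 - w.2| := by
  have hheight : |w.2| - |z.2| ≤ |z.2 - w.2| := by
    rw [abs_sub_comm]
    exact abs_sub_abs_le_abs_sub _ _
  have hslope : 0 ≤ (1 - κ) * (z.1 - w.1) := mul_nonneg (by linarith) (by linarith)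
  have hdrop : 0 ≤ ν * |z.2 - w.2| := by positivity
  have := slideLength_le_add (κ := κ) (ρ := ρ) (ν := ν) (z := z) (w := w)
    (add_nonneg hslope hdrop) (by linarith) (by linarith)
    (by nlinarith [mul_le_mul_of_nonneg_left hheight hν])
  simp only [slide]
  linarith

theorem antilipschitzWith_slide (hκ₀ : 0 < κ) (hκ₁ : κ ≤ 1) (hν : 1 ≤ ν) {K : ℝ≥0}
    (hK : 2 * ν ≤ κ * K) : AntilipschitzWith K (slide κ ρ ν) := by
  refine AntilipschitzWith.of_le_mul_dist fun z w ↦ ?_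
  set d := dist (slide κ ρ ν z) (slide κ ρ ν w)
  have hd : 0 ≤ d := dist_nonneg
  obtain ⟨h₁, h₂⟩ := max_le_iff.1
    (Prod.dist_eq (x := slide κ ρ ν z) (y := slide κ ρ ν w)).ge
  change |z.2 - w.2| ≤ d at h₂
  rw [Real.dist_eq, abs_le] at h₁
  have hνd : ν * |z.2 - w.2| ≤ ν * d := by gcongr
  have hdν : d ≤ ν * d := le_mul_of_one_le_left hd hν
  have hKd : 2 * ν * d ≤ κ * K * d := by gcongr
  have hfst : κ * |z.1 - w.1| ≤ κ * (K * d) := by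
    rcases le_total w.1 z.1 with hwz | hzw
    · rw [abs_of_nonneg (by linarith)]
      linarith [mul_sub_le_slide (κ := κ) (ρ := ρ) (ν := ν) hκ₁ (by linarith) hwz]
    · rw [abs_sub_comm, abs_of_nonneg (by linarith)]
      have := mul_sub_le_slide (κ := κ) (ρ := ρ) (ν := ν) hκ₁ (by linarith) hzw
      rw [abs_sub_comm] at this
      linarith
  have hone : (1 : ℝ) ≤ K := by nlinarith [K.coe_nonneg]
  exact max_le (le_of_mul_le_mul_left hfst hκ₀)
    (h₂.trans (le_mul_of_one_le_left hd hone))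

theorem surjective_slide (hρ : 0 ≤ ρ) (hν : 0 ≤ ν) : Function.Surjective (slide κ ρ ν) := by
  rintro ⟨a, v⟩
  have hcont : Continuous fun x ↦ x - slideLength κ ρ ν (x, v) := by
    unfold slideLength
    fun_prop
  have hlow : a - slideLength κ ρ ν (a, v) ≤ a := sub_le_self _ slideLength_nonneg
  have hhigh : a ≤ a + ρ - slideLength κ ρ ν (a + ρ, v) := by
    linarith [slideLength_le (κ := κ) (z := (a + ρ, v)) hρ hν]
  obtain ⟨x, -, hx⟩ := intermediate_value_Icc (le_add_of_nonneg_right hρ)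
    hcont.continuousOn ⟨hlow, hhigh⟩
  exact ⟨(x, v), Prod.ext hx rfl⟩

theorem shear_shear_neg (c : ℝ) (z : ℝ × ℝ) : shear c (shear (-c) z) = z := by
  simp [shear]

theorem shear_neg_shear (c : ℝ) (z : ℝ × ℝ) : shear (-c) (shear c z) = z := by
  simp [shear]

theorem lipschitzWith_shear (hc : |c| ≤ 1) : LipschitzWith 2 (shear c) := by
  refine LipschitzWith.of_dist_le_mul fun z w ↦ ?_
  obtain ⟨h₁, h₂⟩ := norm_le_iff_abs_le.1 (dist_eq_norm z w).ge
  simp only [Prod.fst_sub, Prod.snd_sub] at h₁ h₂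
  have hmul : |c * (z.1 - w.1)| ≤ dist z w := by
    rw [abs_mul]
    exact (mul_le_of_le_one_left (abs_nonneg _) hc).trans h₁
  rw [dist_eq_norm (shear c z), norm_le_iff_abs_le, NNReal.coe_ofNat]
  refine ⟨h₁.trans (by linarith [dist_nonneg (x := z) (y := w)]), ?_⟩
  calc |z.2 + c * z.1 - (w.2 + c * w.1)| = |z.2 - w.2 + c * (z.1 - w.1)| := by ring_nf
    _ ≤ 2 * dist z w := (abs_add_le _ _).trans (by linarith)

theorem antilipschitzWith_shear (hc : |c| ≤ 1) : AntilipschitzWith 2 (shear c) :=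
  (lipschitzWith_shear (c := -c) (by rwa [abs_neg])).to_rightInverse (shear_neg_shear c)

theorem lipschitzWith_wedgePush (hκ₀ : 0 ≤ κ) (hκ₁ : κ ≤ 1) (hν : 1 ≤ ν) (hc : |c| ≤ 1) {K : ℝ≥0}
    (hK : 2 * ν ≤ K) : LipschitzWith (2 * (K * 2)) (wedgePush κ ρ ν c) :=
  (lipschitzWith_shear hc).comp
    ((lipschitzWith_slide hκ₀ hκ₁ hν hK).comp (lipschitzWith_shear (by rwa [abs_neg])))

theorem antilipschitzWith_wedgePush (hκ₀ : 0 < κ) (hκ₁ : κ ≤ 1) (hν : 1 ≤ ν) (hc : |c| ≤ 1)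
    {K : ℝ≥0} (hK : 2 * ν ≤ κ * K) : AntilipschitzWith (2 * K * 2) (wedgePush κ ρ ν c) :=
  (antilipschitzWith_shear hc).comp
    ((antilipschitzWith_slide hκ₀ hκ₁ hν hK).comp (antilipschitzWith_shear (by rwa [abs_neg])))

theorem surjective_wedgePush (hρ : 0 ≤ ρ) (hν : 0 ≤ ν) :
    Function.Surjective (wedgePush κ ρ ν c) :=
  (Function.RightInverse.surjective (shear_shear_neg c)).comp
    ((surjective_slide hρ hν).comp (Function.RightInverse.surjective (shear_neg_shear c)))

theorem wedgePush_center (hρ : 0 ≤ ρ) : wedgePush κ ρ ν c (ρ, c * ρ) = 0 := by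
  have hlength : slideLength κ ρ ν (ρ, 0) = ρ := by
    simp [slideLength, two_mul, hρ]
  simp [wedgePush, shear, slide, hlength]

theorem support_wedgePush (hz : wedgePush κ ρ ν c z ≠ z) :
    κ * (z.1 - ρ) < z.1 ∧ z.1 < 2 * ρ ∧ ν * |z.2 - c * z.1| < ρ := by
  have hpos : 0 < slideLength κ ρ ν (shear (-c) z) := by
    refine slideLength_nonneg.lt_of_ne fun hzero ↦ hz ?_
    rw [wedgePush, Function.comp_apply, Function.comp_apply, slide, ← hzero, sub_zero]
    exact shear_shear_neg c z
  obtain ⟨hleft, hright, hheight⟩ : 0 < z.1 + κ * (ρ - z.1) ∧ 0 < 2 * ρ - z.1 ∧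
      0 < ρ - ν * |z.2 + -c * z.1| := by
    simpa [slideLength, shear] using hpos
  rw [neg_mul, ← sub_eq_add_neg] at hheight
  exact ⟨by linarith, by linarith, by linarith⟩

theorem neg_lt_fst_of_wedgePush_ne (hκ₀ : 0 < κ) (hκ₁ : κ ≤ 1 / 2) (hz : wedgePush κ ρ ν c z ≠ z) :
    -(2 * κ * ρ) < z.1 := by
  obtain ⟨hleft, hright, -⟩ := support_wedgePush hz
  have hρ : 0 < ρ := by nlinarith
  nlinarith [mul_pos hκ₀ hρ]

theorem norm_le_add_mul (hc : |c| ≤ 1) : ‖z‖ ≤ |z.1| + |z.2 - c * z.1| := by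
  have hmul : |c * z.1| ≤ |z.1| := by
    rw [abs_mul]
    exact mul_le_of_le_one_left (abs_nonneg _) hc
  refine norm_le_iff_abs_le.2 ⟨le_add_of_nonneg_right (abs_nonneg _), ?_⟩
  calc |z.2| = |z.2 - c * z.1 + c * z.1| := by ring_nf
    _ ≤ |z.1| + |z.2 - c * z.1| := (abs_add_le _ _).trans (by linarith)

theorem norm_le_of_wedgePush_ne (hκ₀ : 0 < κ) (hκ₁ : κ ≤ 1 / 2) (hν : 1 ≤ ν) (hc : |c| ≤ 1)
    (hz : wedgePush κ ρ ν c z ≠ z) : ‖z‖ ≤ 4 * ρ := by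
  obtain ⟨-, hright, hheight⟩ := support_wedgePush hz
  have hleft := neg_lt_fst_of_wedgePush_ne hκ₀ hκ₁ hz
  have hv : |z.2 - c * z.1| ≤ ν * |z.2 - c * z.1| := le_mul_of_one_le_left (abs_nonneg _) hν
  have hρ : 0 < ρ := (abs_nonneg _).trans_lt (hv.trans_lt hheight)
  have hfst : |z.1| ≤ 2 * ρ := abs_le.2 ⟨by nlinarith, hright.le⟩
  linarith [norm_le_add_mul (z := z) hc]

theorem half_le_mul_norm_wedgePush {K : ℝ≥0} (hK : AntilipschitzWith K (wedgePush κ ρ ν c))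
    (hρ : 0 ≤ ρ) (hz : ‖z‖ ≤ ρ / 2) : ρ / 2 ≤ K * ‖wedgePush κ ρ ν c z‖ := by
  calc ρ / 2 ≤ ρ - z.1 := by linarith [(abs_le.1 (norm_le_iff_abs_le.1 hz).1).2]
    _ ≤ ‖(ρ, c * ρ) - z‖ :=
      (le_abs_self _).trans (norm_le_iff_abs_le (z := (ρ, c * ρ) - z).1 le_rfl).1
    _ ≤ K * dist (wedgePush κ ρ ν c (ρ, c * ρ)) (wedgePush κ ρ ν c z) := by
      rw [← dist_eq_norm]
      exact hK.le_mul_dist _ _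
    _ = K * ‖wedgePush κ ρ ν c z‖ := by rw [wedgePush_center hρ, dist_zero_left]

section

variable {α : Type*} [Primcodable α] {κ ρ ν c : α → ℝ} {z : α → ℝ × ℝ}

theorem ratComputable_wedgePush_fst (hκ : RatComputable κ) (hρ : RatComputable ρ)
    (hν : RatComputable ν) (hc : RatComputable c) (hfst : RatComputable fun a ↦ (z a).1)
    (hsnd : RatComputable fun a ↦ (z a).2) :
    RatComputable fun a ↦ (wedgePush (κ a) (ρ a) (ν a) (c a) (z a)).1 := by
  have htwo : RatComputable fun _ : α ↦ (2 : ℝ) := by simpa using RatComputable.const 2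
  have hzero : RatComputable fun _ : α ↦ (0 : ℝ) := by simpa using RatComputable.const 0
  exact hfst.sub (hzero.max ((hfst.add (hκ.mul (hρ.sub hfst))).min (((htwo.mul hρ).sub hfst).min
    (hρ.sub (hν.mul (hsnd.add (hc.neg.mul hfst)).abs)))))

theorem ratComputable_wedgePush_snd (hκ : RatComputable κ) (hρ : RatComputable ρ)
    (hν : RatComputable ν) (hc : RatComputable c) (hfst : RatComputable fun a ↦ (z a).1)
    (hsnd : RatComputable fun a ↦ (z a).2) :
    RatComputable fun a ↦ (wedgePush (κ a) (ρ a) (ν a) (c a) (z a)).2 :=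
  (hsnd.add (hc.neg.mul hfst)).add
    (hc.mul (ratComputable_wedgePush_fst hκ hρ hν hc hfst hsnd))

end

end WedgePush

/-! ### Cones with slits -/

section SlitCone

variable {q r : ℕ → ℝ} {s : ℕ} {z : ℝ × ℝ}

/-- The slopes that remain after removing from `[0, 1]` the intervals of radius `r j` around
`q j`. -/
def remainingSlopes (q r : ℕ → ℝ) : Set ℝ := {c ∈ Icc 0 1 | ∀ j, r j ≤ |c - q j|}

/-- Nonpositive exactly on the cone over the slopes remaining at stage `s`. -/
noncomputable def slitConeGauge (q r : ℕ → ℝ) : ℕ → ℝ × ℝ → ℝ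
  | 0, z => max (z.1 - 1) (max (-z.2) (z.2 - z.1))
  | s + 1, z => max (slitConeGauge q r s z) (r s * z.1 - |z.2 - q s * z.1|)

/-- Nonpositive exactly on the union of the cone of stage `s` and the ball of radius `ε`. -/
noncomputable def bluntGauge (q r : ℕ → ℝ) (ε : ℝ) (s : ℕ) (z : ℝ × ℝ) : ℝ :=
  min (‖z‖ - ε) (slitConeGauge q r s z)

theorem isCompact_remainingSlopes : IsCompact (remainingSlopes q r) := by
  have heq : remainingSlopes q r = Icc 0 1 ∩ ⋂ j, {c | r j ≤ |c - q j|} := by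
    ext c
    simp [remainingSlopes]
  rw [heq]
  exact isCompact_Icc.inter_right
    (isClosed_iInter fun j ↦ isClosed_le continuous_const (by fun_prop))

theorem slitConeGauge_nonpos_iff : slitConeGauge q r s z ≤ 0 ↔
    (z.1 ≤ 1 ∧ 0 ≤ z.2 ∧ z.2 ≤ z.1) ∧ ∀ j < s, r j * z.1 ≤ |z.2 - q j * z.1| := by
  induction s with
  | zero => simp [slitConeGauge]
  | succ s ih => rw [slitConeGauge, max_le_iff, ih, Nat.forall_lt_succ_right, sub_nonpos, and_assoc]

theorem monotone_slitConeGauge (z : ℝ × ℝ) : Monotone fun s ↦ slitConeGauge q r s z :=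
  monotone_nat_of_le_succ fun _ ↦ le_max_left _ _

theorem lipschitzWith_mul_fst_sub_abs (q r : ℝ) :
    LipschitzWith (‖r‖₊ + (1 + ‖q‖₊)) fun z : ℝ × ℝ ↦ r * z.1 - |z.2 - q * z.1| := by
  have hmul (a : ℝ) : LipschitzWith ‖a‖₊ fun z : ℝ × ℝ ↦ a * z.1 :=
    ((lipschitzWith_smul a).comp LipschitzWith.prod_fst).weaken (mul_one _).le
  simpa using (hmul r).sub (lipschitzWith_one_norm.comp (LipschitzWith.prod_snd.sub (hmul q)))

theorem lipschitzWith_slitConeGauge (hq : ∀ j, |q j| ≤ 1) (hr : ∀ j, |r j| ≤ 1) (s : ℕ) :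
    LipschitzWith 3 (slitConeGauge q r s) := by
  have hfst : LipschitzWith 1 (Prod.fst : ℝ × ℝ → ℝ) := LipschitzWith.prod_fst
  have hsnd : LipschitzWith 1 (Prod.snd : ℝ × ℝ → ℝ) := LipschitzWith.prod_snd
  induction s with
  | zero =>
    exact ((hfst.sub (LipschitzWith.const 1)).max (hsnd.neg.max (hsnd.sub hfst))).weaken
      (max_le (by norm_num) (max_le (by norm_num) (by norm_num)))
  | succ s ih =>
    have hslit : ‖r s‖₊ + (1 + ‖q s‖₊) ≤ 3 :=
      (add_le_add (hr s : ‖r s‖₊ ≤ 1) (add_le_add_right (hq s : ‖q s‖₊ ≤ 1) 1)).trans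
        (by norm_num)
    exact (ih.max ((lipschitzWith_mul_fst_sub_abs (q s) (r s)).weaken hslit)).weaken (max_self _).le

theorem lipschitzWith_bluntGauge (hq : ∀ j, |q j| ≤ 1) (hr : ∀ j, |r j| ≤ 1) (ε : ℝ) (s : ℕ) :
    LipschitzWith 3 (bluntGauge q r ε s) := by
  have hnorm : LipschitzWith 1 fun z : ℝ × ℝ ↦ ‖z‖ - ε := by
    simpa using lipschitzWith_one_norm.sub (LipschitzWith.const ε)
  exact (hnorm.min (lipschitzWith_slitConeGauge hq hr s)).weaken (by norm_num)

theorem antitone_setOf_bluntGauge_nonpos {ε : ℕ → ℝ} (hε : Antitone ε) :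
    Antitone fun s ↦ {z | bluntGauge q r (ε s) s z ≤ 0} := fun _ _ hst z hz ↦
  (min_le_min (sub_le_sub_left (hε hst) _) (monotone_slitConeGauge z hst)).trans hz

/- A point outside the `2κ`-ball that is moved is so far to the right that the height of the
support is within the margin `μ` of slopes around `c`. -/
theorem bluntGauge_nonpos_of_wedgePush_ne {κ ρ ν c μ : ℝ} (hκ₀ : 0 < κ) (hκ₁ : κ ≤ 1 / 2)
    (hρ : ρ ≤ 1 / 4) (hν : 1 ≤ ν) (hμ : 0 < μ) (hνμ : 1 ≤ ν * (μ * κ)) (hμc : μ ≤ c)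
    (hcμ : c + μ ≤ 1) (hslit : ∀ j < s, r j + μ ≤ |c - q j|) (hz : wedgePush κ ρ ν c z ≠ z) :
    bluntGauge q r (2 * κ) s z ≤ 0 := by
  obtain ⟨-, hright, hheight⟩ := support_wedgePush hz
  have hleft := neg_lt_fst_of_wedgePush_ne hκ₀ hκ₁ hz
  have hv : |z.2 - c * z.1| ≤ μ * κ := by nlinarith [abs_nonneg (z.2 - c * z.1)]
  rcases le_or_gt z.1 κ with hx | hx
  · refine (min_le_left _ _).trans (sub_nonpos.2 ?_)
    have hfst : |z.1| ≤ κ := abs_le.2 ⟨by nlinarith, hx⟩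
    nlinarith [norm_le_add_mul (z := z) (abs_le.2 ⟨by linarith, by linarith⟩ : |c| ≤ 1)]
  · refine (min_le_right _ _).trans (slitConeGauge_nonpos_iff.2 ?_)
    have hx₀ : 0 < z.1 := hκ₀.trans hx
    have hvx : |z.2 - c * z.1| ≤ μ * z.1 := hv.trans (by gcongr)
    obtain ⟨hv₁, hv₂⟩ := abs_le.1 hvx
    refine ⟨⟨by linarith, by nlinarith, by nlinarith⟩, fun j hj ↦ ?_⟩
    have hdist : |c - q j| * z.1 ≤ |z.2 - q j * z.1| + |z.2 - c * z.1| := by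
      rw [← abs_of_pos hx₀, ← abs_mul, abs_of_pos hx₀,
        show (c - q j) * z.1 = z.2 - q j * z.1 - (z.2 - c * z.1) by ring]
      exact abs_sub _ _
    nlinarith [mul_le_mul_of_nonneg_right (hslit j hj) hx₀.le]

theorem forall_bluntGauge_nonpos_iff (hne : (remainingSlopes q r).Nonempty) {ε : ℕ → ℝ}
    (hε : Filter.Tendsto ε Filter.atTop (nhds 0)) :
    (∀ s, bluntGauge q r (ε s) s z ≤ 0) ↔ z ∈ Fan (remainingSlopes q r) := by
  constructor
  · intro hz
    rcases eq_or_ne z 0 with rfl | hz₀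
    · exact mem_fan.2 ⟨0, ⟨le_rfl, zero_le_one⟩, _, hne.some_mem, by simp⟩
    obtain ⟨N, hN⟩ := Filter.eventually_atTop.1 (hε.eventually_lt_const (norm_pos_iff.2 hz₀))
    have hcone (s : ℕ) : slitConeGauge q r s z ≤ 0 := by
      refine (monotone_slitConeGauge z (le_max_left s N)).trans ?_
      exact (min_le_iff.1 (hz _)).resolve_left (by linarith [hN _ (le_max_right s N)])
    obtain ⟨⟨hx₁, hy, hyx⟩, -⟩ := slitConeGauge_nonpos_iff.1 (hcone 0)
    have hx₀ : 0 < z.1 := (hy.trans hyx).lt_of_ne fun h ↦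
      hz₀ (Prod.ext h.symm (le_antisymm (hyx.trans h.ge) hy))
    refine mem_fan.2 ⟨z.1, ⟨hx₀.le, hx₁⟩, z.2 / z.1, ⟨⟨by positivity, ?_⟩, fun j ↦ ?_⟩, ?_⟩
    · exact (div_le_one hx₀).2 hyx
    · rw [div_sub' hx₀.ne', abs_div, abs_of_pos hx₀, le_div_iff₀ hx₀, mul_comm z.1]
      exact (slitConeGauge_nonpos_iff.1 (hcone (j + 1))).2 j j.lt_succ_self
    · rw [mul_div_cancel₀ _ hx₀.ne']
  · rintro hz s
    obtain ⟨t, ⟨ht₀, ht₁⟩, c, ⟨⟨hc₀, hc₁⟩, hc⟩, rfl⟩ := mem_fan.1 hz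
    refine (min_le_right _ _).trans (slitConeGauge_nonpos_iff.2 ⟨⟨ht₁, by positivity,
      mul_le_of_le_one_right ht₀ hc₁⟩, fun j _ ↦ ?_⟩)
    rw [mul_comm t c, ← sub_mul, abs_mul, abs_of_nonneg ht₀]
    exact mul_le_mul_of_nonneg_right (hc j) ht₀

theorem ratComputable_slitConeGauge (hq : RatComputable q) (hr : RatComputable r) :
    RatComputable fun p : (ℚ × ℚ) × ℕ ↦ slitConeGauge q r p.2 (ratPoint p.1) := by
  have hone : RatComputable fun _ : ℚ × ℚ ↦ (1 : ℝ) := by simpa using RatComputable.const 1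
  have hfst : RatComputable fun a : ℚ × ℚ ↦ (a.1 : ℝ) := RatComputable.ratCast Computable.fst
  have hsnd : RatComputable fun a : ℚ × ℚ ↦ (a.2 : ℝ) := RatComputable.ratCast Computable.snd
  refine RatComputable.of_succ_eq_max
    (u := fun a s ↦ slitConeGauge q r s (ratPoint a))
    (t := fun p ↦ r p.2 * p.1.1 - |p.1.2 - q p.2 * p.1.1|)
    ((hfst.sub hone).max (hsnd.neg.max (hsnd.sub hfst))) ?_ fun _ _ ↦ rfl
  exact ((hr.comp Computable.snd).mul (hfst.comp Computable.fst)).sub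
    ((hsnd.comp Computable.fst).sub
      ((hq.comp Computable.snd).mul (hfst.comp Computable.fst))).abs

end SlitCone

/-! ### The pushed fan -/

section PushedFan

open scoped NNReal

/-- Computable data for pushing a fan: the slits to be removed, and for each stage `s` the
priority acting and a slope `slope s` at distance at least `2⁻¹ ^ margin s` from the first `s`
slits and from the boundary of `[0, 1]`. -/
structure PushedFan where
  slitCenter : ℕ → ℝ
  slitRadius : ℕ → ℝ
  slope : ℕ → ℝ
  margin : ℕ → ℕ
  priority : ℕ → ℕ
  priority_injective : Function.Injective priority
  abs_slitCenter_le : ∀ j, |slitCenter j| ≤ 1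
  abs_slitRadius_le : ∀ j, |slitRadius j| ≤ 1
  margin_le_slope : ∀ s, 2⁻¹ ^ margin s ≤ slope s
  slope_add_margin_le : ∀ s, slope s + 2⁻¹ ^ margin s ≤ 1
  slitRadius_add_margin_le : ∀ s, ∀ j < s,
    slitRadius j + 2⁻¹ ^ margin s ≤ |slope s - slitCenter j|
  ratComputable_slitCenter : RatComputable slitCenter
  ratComputable_slitRadius : RatComputable slitRadius
  ratComputable_slope : RatComputable slope
  computable_margin : Computable margin
  computable_priority : Computable priority

namespace PushedFan

variable (D : PushedFan) (s : ℕ)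

/-- The composition of the first `s` pushes is `2 ^ exponent s`-bi-Lipschitz. -/
def exponent : ℕ → ℕ
  | 0 => 0
  | s + 1 => 3 * (exponent s + 3 * D.priority s + 3) + D.margin s + 3

/-- The push of stage `s` is supported in the cone of stage `s` and the ball of radius
`2 * 2⁻¹ ^ scale s`. -/
def scale : ℕ := D.exponent s + 3 * D.priority s + 3

/-- The point that the push of stage `s` moves to the origin has first coordinate
`2⁻¹ ^ depth s`. -/
def depth : ℕ := radiusExponent D.priority D.exponent s (D.priority s) + 2

/-- The push of stage `s`, along a wedge around the line of slope `D.slope s`. -/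
noncomputable def push : ℝ × ℝ → ℝ × ℝ :=
  wedgePush (2⁻¹ ^ D.scale s) (2⁻¹ ^ D.depth s) (2 ^ (D.scale s + D.margin s)) (D.slope s)

/-- Nonpositive exactly on the approximation of stage `s` to the fan over the remaining slopes. -/
noncomputable def gauge : ℝ × ℝ → ℝ :=
  bluntGauge D.slitCenter D.slitRadius (2 * 2⁻¹ ^ D.scale s) s

theorem exponent_succ : D.exponent (s + 1) = 3 * D.scale s + D.margin s + 3 := rfl

theorem monotone_exponent : Monotone D.exponent :=
  monotone_nat_of_le_succ fun s ↦ by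
    rw [exponent]
    omega

theorem depth_lt_scale : D.depth s < D.scale s := by
  have := D.monotone_exponent (lastReset_le D.priority s (D.priority s))
  rw [depth, scale, radiusExponent]
  omega

theorem half_pow_scale_le : (2⁻¹ : ℝ) ^ D.scale s ≤ 1 / 2 := by
  rw [one_div]
  exact pow_le_of_le_one (by norm_num) (by norm_num) (by rw [scale]; omega)

theorem one_le_two_pow_scale : (1 : ℝ) ≤ 2 ^ (D.scale s + D.margin s) :=
  one_le_pow₀ one_le_two

theorem abs_slope_le : |D.slope s| ≤ 1 := by
  have hpos : (0 : ℝ) < 2⁻¹ ^ D.margin s := by positivity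
  have := D.margin_le_slope s
  have := D.slope_add_margin_le s
  exact abs_le.2 ⟨by linarith, by linarith⟩

theorem lipschitzWith_push : LipschitzWith (2 ^ (2 * D.scale s + D.margin s + 3)) (D.push s) := by
  have hK : 2 * 2 ^ (D.scale s + D.margin s) ≤
      (((2 : ℝ≥0) ^ (2 * D.scale s + D.margin s + 1) : ℝ≥0) : ℝ) := by
    push_cast
    rw [← pow_succ']
    exact pow_le_pow_right₀ one_le_two (by omega)
  rw [show (2 : ℝ≥0) ^ (2 * D.scale s + D.margin s + 3) =
    2 * (2 ^ (2 * D.scale s + D.margin s + 1) * 2) by ring]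
  exact lipschitzWith_wedgePush (by positivity) ((D.half_pow_scale_le s).trans (by norm_num))
    (D.one_le_two_pow_scale s) (D.abs_slope_le s) hK

theorem antilipschitzWith_push :
    AntilipschitzWith (2 ^ (2 * D.scale s + D.margin s + 3)) (D.push s) := by
  have hK : 2 * 2 ^ (D.scale s + D.margin s) ≤
      (2⁻¹ : ℝ) ^ D.scale s * ((2 : ℝ≥0) ^ (2 * D.scale s + D.margin s + 1) : ℝ≥0) := by
    push_cast
    rw [inv_pow, show 2 * D.scale s + D.margin s + 1 = D.scale s + (D.scale s + D.margin s + 1) by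
      ring, pow_add 2 (D.scale s) (_ + 1), inv_mul_cancel_left₀ (by positivity), pow_succ']
  rw [show (2 : ℝ≥0) ^ (2 * D.scale s + D.margin s + 3) =
    2 * 2 ^ (2 * D.scale s + D.margin s + 1) * 2 by ring]
  exact antilipschitzWith_wedgePush (by positivity) ((D.half_pow_scale_le s).trans (by norm_num))
    (D.one_le_two_pow_scale s) (D.abs_slope_le s) hK

theorem push_eq_self {z : ℝ × ℝ}
    (hz : 2⁻¹ ^ radiusExponent D.priority D.exponent s (D.priority s) < ‖z‖) : D.push s z = z := by
  by_contra hmoved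
  refine hz.not_ge ((norm_le_of_wedgePush_ne (by positivity) (D.half_pow_scale_le s)
    (D.one_le_two_pow_scale s) (D.abs_slope_le s) hmoved).trans_eq ?_)
  rw [depth, pow_add]
  ring

theorem le_norm_push {z : ℝ × ℝ}
    (hz : ‖z‖ ≤ 2⁻¹ ^ radiusExponent D.priority D.exponent s (D.priority s + 1)) :
    2⁻¹ ^ D.exponent (s + 1) ≤ ‖D.push s z‖ := by
  have hhalf : (2⁻¹ : ℝ) ^ D.depth s / 2 = 2⁻¹ ^ (D.depth s + 1) := by
    rw [pow_succ, div_eq_mul_inv]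
  have hz' : ‖z‖ ≤ 2⁻¹ ^ D.depth s / 2 := by
    rw [hhalf]
    refine hz.trans (pow_le_pow_of_le_one (by norm_num) (by norm_num) ?_)
    have := D.monotone_exponent (lastReset_mono D.priority s (D.priority s).le_succ)
    simp only [depth, radiusExponent, Nat.succ_eq_add_one] at this ⊢
    omega
  have hmoved := half_le_mul_norm_wedgePush (D.antilipschitzWith_push s) (by positivity) hz'
  have hscale : (2⁻¹ : ℝ) ^ D.scale s ≤ 2⁻¹ ^ (D.depth s + 1) :=
    pow_le_pow_of_le_one (by norm_num) (by norm_num) (D.depth_lt_scale s)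
  rw [hhalf, NNReal.coe_pow, NNReal.coe_ofNat] at hmoved
  calc (2⁻¹ : ℝ) ^ D.exponent (s + 1)
      = (2 ^ (2 * D.scale s + D.margin s + 3))⁻¹ * 2⁻¹ ^ D.scale s := by
        rw [exponent_succ, ← inv_pow, ← pow_add]
        ring_nf
    _ ≤ ‖D.push s z‖ := (inv_mul_le_iff₀ (by positivity)).2 (hscale.trans hmoved)

/-- The pushes of all stages as a push system. -/
noncomputable def pushSystem : PushSystem (ℝ × ℝ) where
  priority := D.priority
  exponent := D.exponent
  push := D.push
  priority_injective := D.priority_injective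
  surjective_push _ := surjective_wedgePush (by positivity) (by positivity)
  exists_biLipschitz_push s := by
    refine ⟨_, ?_, D.lipschitzWith_push s, D.antilipschitzWith_push s⟩
    rw [exponent_succ, scale]
    omega
  push_eq_self s _ hz := D.push_eq_self s hz
  le_norm_push s _ hz := D.le_norm_push s hz

/-- The slopes of the fan. -/
def slopes : Set ℝ := remainingSlopes D.slitCenter D.slitRadius

/-- The preimage of the fan over `D.slopes` under the limit of the stage maps, as an intersection of
the preimages of the approximations to the fan. -/
def carrier : Set (ℝ × ℝ) := {x | ∀ s, D.gauge s (D.pushSystem.stageMap s x) ≤ 0}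

theorem gauge_nonpos_of_push_ne {z : ℝ × ℝ} (hz : D.push s z ≠ z) : D.gauge s z ≤ 0 := by
  refine bluntGauge_nonpos_of_wedgePush_ne (by positivity) (D.half_pow_scale_le s) ?_
    (D.one_le_two_pow_scale s) (by positivity) (le_of_eq ?_) (D.margin_le_slope s)
    (D.slope_add_margin_le s) (D.slitRadius_add_margin_le s) hz
  · calc (2⁻¹ : ℝ) ^ D.depth s ≤ 2⁻¹ ^ 2 :=
        pow_le_pow_of_le_one (by norm_num) (by norm_num) (by rw [depth]; omega)
      _ = 1 / 4 := by norm_num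
  · rw [← pow_add, inv_pow, add_comm, mul_inv_cancel₀ (by positivity)]

theorem lipschitzWith_gauge : LipschitzWith 3 (D.gauge s) :=
  lipschitzWith_bluntGauge D.abs_slitCenter_le D.abs_slitRadius_le _ s

theorem le_scale : s ≤ D.scale s := by
  have : s ≤ D.exponent s := by
    induction s with
    | zero => exact Nat.zero_le _
    | succ s ih =>
      rw [exponent]
      omega
  rw [scale]
  omega

theorem monotone_scale : Monotone D.scale := monotone_nat_of_le_succ fun s ↦ by
  have := D.exponent_succ s
  rw [scale, scale] at *
  omega

theorem tendsto_two_mul_half_pow_scale :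
    Filter.Tendsto (fun s ↦ 2 * (2⁻¹ : ℝ) ^ D.scale s) Filter.atTop (nhds 0) := by
  have hpow : Filter.Tendsto (fun n : ℕ ↦ 2 * (2⁻¹ : ℝ) ^ n) Filter.atTop (nhds (2 * 0)) :=
    (tendsto_pow_atTop_nhds_zero_of_lt_one (by norm_num) (by norm_num)).const_mul 2
  rw [mul_zero] at hpow
  exact hpow.comp (Filter.tendsto_atTop_mono D.le_scale Filter.tendsto_id)

theorem carrier_eq_preimage (hne : D.slopes.Nonempty) :
    D.carrier = D.pushSystem.limitHomeomorph ⁻¹' Fan D.slopes := by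
  have hanti : Antitone fun s ↦ 2 * (2⁻¹ : ℝ) ^ D.scale s := fun s t hst ↦ by
    have := pow_le_pow_of_le_one (a := (2⁻¹ : ℝ)) (by norm_num) (by norm_num) (D.monotone_scale hst)
    linarith
  ext x
  calc x ∈ D.carrier ↔ ∀ s, D.pushSystem.limitMap x ∈ {z | D.gauge s z ≤ 0} :=
        D.pushSystem.forall_stageMap_mem_iff (V := fun s ↦ {z | D.gauge s z ≤ 0})
          (antitone_setOf_bluntGauge_nonpos hanti)
          (fun s ↦ isClosed_le (D.lipschitzWith_gauge s).continuous continuous_const)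
          fun s _ hz ↦ not_imp_comm.1 (D.gauge_nonpos_of_push_ne s) hz
    _ ↔ D.pushSystem.limitMap x ∈ Fan D.slopes :=
        forall_bluntGauge_nonpos_iff hne D.tendsto_two_mul_half_pow_scale

theorem isDendroid_carrier (hne : D.slopes.Nonempty) (hdense : Dense D.slopesᶜ) :
    IsDendroid D.carrier := by
  rw [D.carrier_eq_preimage hne]
  exact (isDendroid_fan isCompact_remainingSlopes hne hdense).preimage_homeomorph _

end PushedFan

end PushedFan

/-! ### The pushed fan is a `Π⁰₁` set -/

section Effectivity

open scoped NNReal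

/-- A real number with a computable sequence of rational approximations converging at the rate
`2⁻¹ ^ k`. -/
def IsComputableReal (c : ℝ) : Prop := ∃ f : ℕ → ℚ, Computable f ∧ ∀ k, |c - f k| < 2⁻¹ ^ k

theorem IsComputablePoint.isComputableReal_div {z : ℝ × ℝ} (hz : IsComputablePoint z)
    (hpos : 0 < z.1) : IsComputableReal (z.2 / z.1) := by
  let h (p : ℕ × ℚ) (z : ℝ × ℝ) : ℝ := 2⁻¹ ^ p.1 * z.1 - |z.2 - p.2 * z.1|
  have hh : RatComputable fun r : (ℕ × ℚ) × (ℚ × ℚ) ↦ h r.1 (ratPoint r.2) := by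
    have hfst : RatComputable fun r : (ℕ × ℚ) × (ℚ × ℚ) ↦ (r.2.1 : ℝ) :=
      RatComputable.ratCast (Computable.fst.comp Computable.snd)
    exact ((ratComputable_half_pow (Computable.fst.comp Computable.fst)).mul hfst).sub
      ((RatComputable.ratCast (Computable.snd.comp Computable.snd)).sub
        ((RatComputable.ratCast (Computable.snd.comp Computable.fst)).mul hfst)).abs
  have hK : RatComputable fun p : ℕ × ℚ ↦
      ((‖(2⁻¹ : ℝ) ^ p.1‖₊ + (1 + ‖(p.2 : ℝ)‖₊) : ℝ≥0) : ℝ) := by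
    have hone : RatComputable fun _ : ℕ × ℚ ↦ (1 : ℝ) := by simpa using RatComputable.const 1
    exact (ratComputable_half_pow Computable.fst).abs.add
      (hone.add (RatComputable.ratCast Computable.snd).abs)
  have hre : REPred fun p ↦ 0 < h p z :=
    hz.rePred_pos hh hK fun p ↦ lipschitzWith_mul_fst_sub_abs _ _
  have near_iff (p : ℕ × ℚ) : 0 < h p z ↔ |z.2 / z.1 - p.2| < 2⁻¹ ^ p.1 := by
    rw [sub_pos, div_sub' hpos.ne', abs_div, abs_of_pos hpos, div_lt_iff₀ hpos, mul_comm z.1]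
  refine exists_computable_choice (P := fun k q ↦ |z.2 / z.1 - (q : ℚ)| < 2⁻¹ ^ k)
    (hre.of_eq near_iff) fun k ↦ ?_
  obtain ⟨q, hq⟩ := Rat.denseRange_cast.exists_dist_lt (z.2 / z.1) (ε := 2⁻¹ ^ k) (by positivity)
  exact ⟨q, hq⟩

namespace PushedFan

variable (D : PushedFan)

theorem computable_exponent : Computable D.exponent := by
  have hstep : Computable₂ fun (_ : ℕ) (r : ℕ × ℕ) ↦
      3 * (r.2 + 3 * D.priority r.1 + 3) + D.margin r.1 + 3 := by
    have hfst : Computable fun p : ℕ × (ℕ × ℕ) ↦ p.2.1 := Computable.fst.comp Computable.snd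
    have hsnd : Computable fun p : ℕ × (ℕ × ℕ) ↦ p.2.2 := Computable.snd.comp Computable.snd
    have hthree : Computable fun _ : ℕ × (ℕ × ℕ) ↦ 3 := Computable.const 3
    exact computable_nat_add (computable_nat_add (computable_nat_mul hthree (computable_nat_add
      (computable_nat_add hsnd (computable_nat_mul hthree (D.computable_priority.comp hfst)))
      hthree)) (D.computable_margin.comp hfst)) hthree
  refine (Computable.nat_rec Computable.id (Computable.const 0) hstep).of_eq fun s ↦ ?_
  induction s with
  | zero => rfl
  | succ s ih =>
    rw [exponent, ← ih]
    rfl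

theorem computable_scale : Computable D.scale :=
  computable_nat_add (computable_nat_add D.computable_exponent
    (computable_nat_mul (Computable.const 3) D.computable_priority)) (Computable.const 3)

theorem computable_depth : Computable D.depth :=
  computable_nat_add ((computable_radiusExponent D.computable_priority D.computable_exponent).comp
    (Computable.id.pair D.computable_priority)) (Computable.const 2)

theorem exists_computable_stageMap : ∃ g : ℕ × (ℚ × ℚ) → ℚ × ℚ, Computable g ∧
    ∀ s q, D.pushSystem.stageMap s (ratPoint q) = ratPoint (g (s, q)) := by
  have hκ : RatComputable fun p : ℕ × (ℚ × ℚ) ↦ (2⁻¹ : ℝ) ^ D.scale p.1 :=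
    ratComputable_half_pow (D.computable_scale.comp Computable.fst)
  have hρ : RatComputable fun p : ℕ × (ℚ × ℚ) ↦ (2⁻¹ : ℝ) ^ D.depth p.1 :=
    ratComputable_half_pow (D.computable_depth.comp Computable.fst)
  have hν : RatComputable fun p : ℕ × (ℚ × ℚ) ↦ (2 : ℝ) ^ (D.scale p.1 + D.margin p.1) :=
    ratComputable_two_pow (computable_nat_add (D.computable_scale.comp Computable.fst)
      (D.computable_margin.comp Computable.fst))
  have hc : RatComputable fun p : ℕ × (ℚ × ℚ) ↦ D.slope p.1 :=
    D.ratComputable_slope.comp Computable.fst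
  have hfst : RatComputable fun p : ℕ × (ℚ × ℚ) ↦ (ratPoint p.2).1 :=
    RatComputable.ratCast (Computable.fst.comp Computable.snd)
  have hsnd : RatComputable fun p : ℕ × (ℚ × ℚ) ↦ (ratPoint p.2).2 :=
    RatComputable.ratCast (Computable.snd.comp Computable.snd)
  exact exists_computable_composeUpTo (ratComputable_wedgePush_fst hκ hρ hν hc hfst hsnd)
    (ratComputable_wedgePush_snd hκ hρ hν hc hfst hsnd)

theorem ratComputable_gauge :
    RatComputable fun p : ℕ × (ℚ × ℚ) ↦ D.gauge p.1 (ratPoint p.2) := by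
  have hball : RatComputable fun p : ℕ × (ℚ × ℚ) ↦ ‖ratPoint p.2‖ - 2 * 2⁻¹ ^ D.scale p.1 := by
    have htwo : RatComputable fun _ : ℕ × (ℚ × ℚ) ↦ (2 : ℝ) := by simpa using RatComputable.const 2
    exact (ratComputable_norm_ratPoint.comp Computable.snd).sub
      (htwo.mul (ratComputable_half_pow (D.computable_scale.comp Computable.fst)))
  exact hball.min ((ratComputable_slitConeGauge D.ratComputable_slitCenter
    D.ratComputable_slitRadius).comp (Computable.snd.pair Computable.fst))

theorem lipschitzWith_stageMap (s : ℕ) :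
    LipschitzWith (2 ^ D.exponent s) (D.pushSystem.stageMap s) :=
  (D.pushSystem.biLipschitz_stageMap s).1

theorem isPi01Closed_carrier : IsPi01Closed D.carrier := by
  obtain ⟨g, hg, hstage⟩ := D.exists_computable_stageMap
  refine isPi01Closed_setOf_forall_nonpos (h := fun s x ↦ D.gauge s (D.pushSystem.stageMap s x))
    (K := fun s ↦ 3 * 2 ^ D.exponent s) ?_ ?_
    fun s ↦ (D.lipschitzWith_gauge s).comp (D.lipschitzWith_stageMap s)
  · simp only [hstage]
    exact D.ratComputable_gauge.comp (Computable.fst.pair hg)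
  · simpa using (RatComputable.const 3).mul (ratComputable_two_pow D.computable_exponent)

/-! ### Noncomputability of the points of the pushed fan -/

variable {D} {x : ℝ × ℝ}

theorem isComputablePoint_stageMap (hx : IsComputablePoint x) (s : ℕ) :
    IsComputablePoint (D.pushSystem.stageMap s x) := by
  obtain ⟨g, hg, hstage⟩ := D.exists_computable_stageMap
  exact hx.map (D.lipschitzWith_stageMap s)
    (hg.comp ((Computable.const s).pair Computable.id)) (hstage s)

theorem exists_isComputableReal_mem_slopes (hx : IsComputablePoint x) (hcarrier : x ∈ D.carrier)
    (hne : D.slopes.Nonempty) (hapex : D.pushSystem.limitMap x ≠ 0) :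
    ∃ c ∈ D.slopes, IsComputableReal c := by
  rw [D.carrier_eq_preimage hne] at hcarrier
  obtain ⟨t, ht, c, hc, htc⟩ := mem_fan.1 hcarrier
  obtain ⟨s, hs⟩ := D.pushSystem.exists_limitMap_eq_stageMap hapex
  have heq : D.pushSystem.limitMap x = (t, t * c) := htc.symm
  have htpos : 0 < t := ht.1.lt_of_ne fun h ↦ hapex (by simp [heq, ← h])
  have hcomp : IsComputablePoint (t, t * c) := by
    rw [← heq, hs]
    exact isComputablePoint_stageMap hx s
  exact ⟨c, hc, by simpa [htpos.ne'] using hcomp.isComputableReal_div htpos⟩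

theorem exists_computable_settled (hx : IsComputablePoint x)
    (hapex : D.pushSystem.limitMap x = 0) :
    ∃ f : ℕ → ℕ, Computable f ∧ ∀ n, D.pushSystem.Settled n (f n) := by
  obtain ⟨g, hg, hstage⟩ := D.exists_computable_stageMap
  let h (p : ℕ × ℕ) (x : ℝ × ℝ) : ℝ := D.pushSystem.radius p.2 p.1 - ‖D.pushSystem.stageMap p.2 x‖
  have hh : RatComputable fun r : (ℕ × ℕ) × (ℚ × ℚ) ↦ h r.1 (ratPoint r.2) := by
    simp only [h, hstage]
    have hsn : Computable fun r : (ℕ × ℕ) × (ℚ × ℚ) ↦ (r.1.2, r.1.1) :=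
      (Computable.snd.comp Computable.fst).pair (Computable.fst.comp Computable.fst)
    exact (ratComputable_half_pow ((computable_radiusExponent D.computable_priority
      D.computable_exponent).comp hsn)).sub (ratComputable_norm_ratPoint.comp
      (hg.comp ((Computable.snd.comp Computable.fst).pair Computable.snd)))
  have hK : RatComputable fun p : ℕ × ℕ ↦ (((2 : ℝ≥0) ^ D.exponent p.2 : ℝ≥0) : ℝ) := by
    simpa using ratComputable_two_pow (D.computable_exponent.comp Computable.snd)
  have hLip (p : ℕ × ℕ) : LipschitzWith (2 ^ D.exponent p.2) (h p) := by
    simpa using (LipschitzWith.const (D.pushSystem.radius p.2 p.1)).sub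
      (lipschitzWith_one_norm.comp (D.lipschitzWith_stageMap p.2))
  obtain ⟨f, hf, hfpos⟩ := exists_computable_choice (P := fun n s ↦ 0 < h (n, s) x)
    (hx.rePred_pos hh hK hLip) fun n ↦
      (D.pushSystem.exists_norm_stageMap_lt hapex n).imp fun _ ↦ sub_pos.2
  exact ⟨f, hf, fun n ↦ .of_norm_stageMap_le hapex (sub_pos.1 (hfpos n)).le⟩

theorem computablePred_mem_range_priority (hx : IsComputablePoint x)
    (hapex : D.pushSystem.limitMap x = 0) : ComputablePred (· ∈ range D.priority) := by
  obtain ⟨f, hf, hsettled⟩ := exists_computable_settled hx hapex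
  have hne : ComputablePred fun p : ℕ × ℕ ↦ D.priority p.2 ≠ p.1 :=
    (computablePred_comp Primrec.eq.computablePred
      ((D.computable_priority.comp Computable.snd).pair Computable.fst)).not
  refine (computablePred_forall_lt (p := fun m t ↦ D.priority t ≠ m) hne
    (hf.comp Computable.succ)).not.of_eq fun m ↦ ?_
  constructor
  · intro h
    push Not at h
    obtain ⟨t, -, rfl⟩ := h
    exact mem_range_self t
  · rintro ⟨t, rfl⟩ h
    refine h t ?_ rfl
    by_contra! hle
    exact (hsettled _ t hle).not_gt (Nat.lt_succ_self _)

end PushedFan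

end Effectivity

/-! ### A `Π⁰₁` set of slopes without computable elements -/

section Diagonalization

open Encodable Denumerable Nat.Partrec

theorem exists_mem_Ioo_forall_lt_abs_sub (a : ℕ → ℝ) :
    ∃ x ∈ Ioo (0 : ℝ) 1, ∀ e, 2⁻¹ ^ (e + 4) < |x - a e| := by
  have hsum : HasSum (fun e : ℕ ↦ 2 * (2⁻¹ : ℝ) ^ (e + 4)) (1 / 4) := by
    have h := hasSum_geometric_two.mul_left (1 / 8 : ℝ)
    rw [show (1 / 8 * 2 : ℝ) = 1 / 4 by norm_num] at h
    exact h.congr_fun fun e ↦ by rw [one_div 2, pow_add]; ring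
  have hvol : MeasureTheory.volume (⋃ e, closedBall (a e) (2⁻¹ ^ (e + 4))) <
      MeasureTheory.volume (Ioo (0 : ℝ) 1) :=
    calc MeasureTheory.volume (⋃ e, closedBall (a e) (2⁻¹ ^ (e + 4)))
        ≤ ∑' e, MeasureTheory.volume (closedBall (a e) (2⁻¹ ^ (e + 4))) :=
          MeasureTheory.measure_iUnion_le _
      _ = ENNReal.ofReal (1 / 4) := by
          simp only [Real.volume_closedBall]
          rw [← ENNReal.ofReal_tsum_of_nonneg (fun e ↦ by positivity) hsum.summable, hsum.tsum_eq]
      _ < MeasureTheory.volume (Ioo (0 : ℝ) 1) := by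
          rw [Real.volume_Ioo]
          exact (ENNReal.ofReal_lt_ofReal_iff (by norm_num)).2 (by norm_num)
  obtain ⟨x, hx, hfar⟩ := not_subset.1 fun h ↦ (MeasureTheory.measure_mono h).not_gt hvol
  refine ⟨x, hx, fun e ↦ ?_⟩
  by_contra! hle
  exact hfar (mem_iUnion.2 ⟨e, hle⟩)

/-- The approximation with index `e + 4` produced by the `e`-th program within `t` steps. -/
def diagValue (e t : ℕ) : Option ℚ := ((ofNat Code e).evaln t (e + 4)).map (ofNat ℚ)

/-- The slit numbered `⟨e, t⟩` is centered at the diagonal value of the `e`-th program, moved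
to the nearest point of `[0, 1]`. -/
noncomputable def diagCenter (j : ℕ) : ℝ :=
  max 0 (min 1 ((diagValue j.unpair.1 j.unpair.2).getD 0 : ℚ))

/-- The slit numbered `⟨e, t⟩` is void unless the `e`-th program halts within `t` steps. -/
noncomputable def diagRadius (j : ℕ) : ℝ :=
  if (diagValue j.unpair.1 j.unpair.2).isSome then 2⁻¹ ^ (j.unpair.1 + 4) else 0

theorem diagValue_unique {e t t' : ℕ} {q q' : ℚ} (h : diagValue e t = some q)
    (h' : diagValue e t' = some q') : q = q' := by
  obtain ⟨m, hm, rfl⟩ := Option.map_eq_some_iff.1 h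
  obtain ⟨m', hm', rfl⟩ := Option.map_eq_some_iff.1 h'
  exact congrArg _ (Part.mem_unique (Code.evaln_sound hm) (Code.evaln_sound hm'))

theorem computable_diagValue : Computable fun j : ℕ ↦ diagValue j.unpair.1 j.unpair.2 := by
  have hfst : Computable fun j : ℕ ↦ j.unpair.1 := Computable.fst.comp Computable.unpair
  exact Computable.option_map (computable_evaln (Computable.snd.comp Computable.unpair)
    ((Computable.ofNat Code).comp hfst) (computable_nat_add hfst (Computable.const 4)))
    ((Computable.ofNat ℚ).comp Computable.snd)

theorem ratComputable_diagCenter : RatComputable diagCenter := by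
  have hzero : RatComputable fun _ : ℕ ↦ (0 : ℝ) := by simpa using RatComputable.const 0
  have hone : RatComputable fun _ : ℕ ↦ (1 : ℝ) := by simpa using RatComputable.const 1
  exact hzero.max (hone.min (RatComputable.ratCast
    (Computable.option_getD computable_diagValue (Computable.const 0))))

theorem ratComputable_diagRadius : RatComputable diagRadius := by
  obtain ⟨g, hg, hpow⟩ := ratComputable_half_pow (computable_nat_add
    (Computable.fst.comp Computable.unpair) (Computable.const 4))
  refine ⟨fun j ↦ if (diagValue j.unpair.1 j.unpair.2).isSome then g j else 0,
    computable_ite ?_ hg (Computable.const 0), fun j ↦ ?_⟩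
  · exact ComputablePred.computable_iff.2
      ⟨_, Primrec.option_isSome.to_comp.comp computable_diagValue, rfl⟩
  · dsimp only at hpow
    simp only [diagRadius, hpow, apply_ite (Rat.cast : ℚ → ℝ), Rat.cast_zero]

theorem abs_diagCenter_le (j : ℕ) : |diagCenter j| ≤ 1 := by
  rw [abs_of_nonneg (le_max_left _ _)]
  exact max_le zero_le_one (min_le_left _ _)

theorem abs_diagRadius_le (j : ℕ) : |diagRadius j| ≤ 1 := by
  unfold diagRadius
  split_ifs
  · rw [abs_of_nonneg (by positivity)]
    exact pow_le_one₀ (by norm_num) (by norm_num)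
  · simp

theorem exists_mem_Ioo_forall_diagRadius_lt :
    ∃ x ∈ Ioo (0 : ℝ) 1, ∀ j, diagRadius j < |x - diagCenter j| := by
  have hvalue (e : ℕ) : ∃ q, ∀ t q', diagValue e t = some q' → q' = q := by
    by_cases h : ∃ t q, diagValue e t = some q
    · obtain ⟨t, q, hq⟩ := h
      exact ⟨q, fun t' q' hq' ↦ diagValue_unique hq' hq⟩
    · exact ⟨0, fun t q hq ↦ (h ⟨t, q, hq⟩).elim⟩
  choose v hv using hvalue
  obtain ⟨x, hx, hfar⟩ := exists_mem_Ioo_forall_lt_abs_sub fun e ↦ max 0 (min 1 (v e : ℝ))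
  refine ⟨x, hx, fun j ↦ ?_⟩
  cases h : diagValue j.unpair.1 j.unpair.2 with
  | none => simp [diagRadius, diagCenter, h, hx.1.ne']
  | some q => simpa [diagRadius, diagCenter, h, hv _ _ _ h] using hfar j.unpair.1

theorem not_isComputableReal_of_mem_remainingSlopes {c : ℝ}
    (hc : c ∈ remainingSlopes diagCenter diagRadius) : ¬ IsComputableReal c := by
  rintro ⟨f, hf, hfc⟩
  obtain ⟨code, hcode⟩ := Code.exists_code.1 hf
  set e := encode code
  obtain ⟨m, hm, hfm⟩ : ∃ m ∈ code.eval (e + 4), ofNat ℚ m = f (e + 4) := by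
    simpa [hcode] using ofNat_encode (f (e + 4))
  obtain ⟨t, ht⟩ := Code.evaln_complete.1 hm
  have hdiag : diagValue e t = some (f (e + 4)) := by
    rw [diagValue, ofNat_encode, Option.mem_def.1 ht, Option.map_some, hfm]
  have hfar : 2⁻¹ ^ (e + 4) ≤ |c - max 0 (min 1 (f (e + 4) : ℝ))| := by
    simpa [diagRadius, diagCenter, hdiag] using hc.2 (Nat.pair e t)
  have hproj : |c - max 0 (min 1 (f (e + 4) : ℝ))| ≤ |c - f (e + 4)| := by
    have h := (LipschitzWith.projIcc (zero_le_one (α := ℝ))).dist_le_mul c (f (e + 4))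
    rw [projIcc_of_mem _ hc.1] at h
    simpa [Subtype.dist_eq, Real.dist_eq, coe_projIcc] using h
  exact (hfar.trans hproj).not_gt (hfc _)

end Diagonalization

section Slopes

theorem exists_rat_forall_lt_le {ι : Type*} [Finite ι] {q r : ι → ℝ} {x : ℝ}
    (hx : x ∈ Ioo (0 : ℝ) 1) (hgap : ∀ j, r j < |x - q j|) : ∃ (c : ℚ) (m : ℕ),
    2⁻¹ ^ m ≤ (c : ℝ) ∧ c + 2⁻¹ ^ m ≤ (1 : ℝ) ∧ ∀ j, r j + 2⁻¹ ^ m ≤ |c - q j| := by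
  have hsmall {ε : ℝ} (hε : 0 < ε) : ∀ᶠ m : ℕ in Filter.atTop, 2 * 2⁻¹ ^ m < ε :=
    eventually_mul_half_pow_lt 2 hε
  obtain ⟨m, hleft, hright, hslits⟩ := ((hsmall hx.1).and ((hsmall (sub_pos.2 hx.2)).and
    (Filter.eventually_all.2 fun j ↦ hsmall (sub_pos.2 (hgap j))))).exists
  obtain ⟨c, hc⟩ := Rat.denseRange_cast.exists_dist_lt x (ε := 2⁻¹ ^ m) (by positivity)
  rw [Real.dist_eq] at hc
  obtain ⟨hc₁, hc₂⟩ := abs_lt.1 hc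
  refine ⟨c, m, by linarith, by linarith, fun j ↦ ?_⟩
  linarith [hslits j, abs_sub_le x c (q j)]

theorem exists_computable_slope {q r : ℕ → ℝ} (hq : RatComputable q) (hr : RatComputable r) {x : ℝ}
    (hx : x ∈ Ioo (0 : ℝ) 1) (hgap : ∀ j, r j < |x - q j|) :
    ∃ f : ℕ → ℚ × ℕ, Computable f ∧ ∀ s, 2⁻¹ ^ (f s).2 ≤ ((f s).1 : ℝ) ∧
      (f s).1 + 2⁻¹ ^ (f s).2 ≤ (1 : ℝ) ∧ ∀ j < s, r j + 2⁻¹ ^ (f s).2 ≤ |(f s).1 - q j| := by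
  have hc : RatComputable fun p : ℕ × (ℚ × ℕ) ↦ (p.2.1 : ℝ) :=
    RatComputable.ratCast (Computable.fst.comp Computable.snd)
  have hm : RatComputable fun p : ℕ × (ℚ × ℕ) ↦ (2⁻¹ : ℝ) ^ p.2.2 :=
    ratComputable_half_pow (Computable.snd.comp Computable.snd)
  have hone : RatComputable fun _ : ℕ × (ℚ × ℕ) ↦ (1 : ℝ) := by simpa using RatComputable.const 1
  have hslit : ComputablePred fun p : (ℕ × (ℚ × ℕ)) × ℕ ↦
      r p.2 + 2⁻¹ ^ p.1.2.2 ≤ |p.1.2.1 - q p.2| :=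
    ((hr.comp Computable.snd).add (hm.comp Computable.fst)).computablePred_le
      ((hc.comp Computable.fst).sub (hq.comp Computable.snd)).abs
  refine exists_computable_choice (P := fun s (p : ℚ × ℕ) ↦ 2⁻¹ ^ p.2 ≤ (p.1 : ℝ) ∧
    p.1 + 2⁻¹ ^ p.2 ≤ (1 : ℝ) ∧ ∀ j < s, r j + 2⁻¹ ^ p.2 ≤ |p.1 - q j|)
    (computablePred_and (hm.computablePred_le hc) (computablePred_and
      ((hc.add hm).computablePred_le hone)
      (computablePred_forall_lt hslit Computable.fst))).to_re fun s ↦ ?_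
  obtain ⟨c, m, hleft, hright, hslits⟩ :=
    exists_rat_forall_lt_le (ι := Fin s) hx fun j ↦ hgap j
  exact ⟨(c, m), hleft, hright, fun j hj ↦ hslits ⟨j, hj⟩⟩

end Slopes

/-! ### An injective enumeration of a noncomputable set -/

section Priority

open Encodable Denumerable Nat.Partrec

/-- The code `c` halts on input `0` at step `t + 1` and not earlier. -/
def FirstHaltsAt (c : Code) (t : ℕ) : Prop :=
  (c.evaln (t + 1) 0).isSome ∧ ¬ (c.evaln t 0).isSome

instance (c : Code) : DecidablePred (FirstHaltsAt c) := fun _ ↦ instDecidableAnd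

theorem isSome_evaln_mono {c : Code} {t t' n : ℕ} (h : t ≤ t') (ht : (c.evaln t n).isSome) :
    (c.evaln t' n).isSome := by
  obtain ⟨v, hv⟩ := Option.isSome_iff_exists.1 ht
  exact Option.isSome_iff_exists.2 ⟨v, Code.evaln_mono h hv⟩

theorem FirstHaltsAt.unique {c : Code} {t t' : ℕ} (h : FirstHaltsAt c t)
    (h' : FirstHaltsAt c t') : t = t' := by
  rcases lt_trichotomy t t' with hlt | heq | hgt
  · exact (h'.2 (isSome_evaln_mono hlt h.1)).elim
  · exact heq
  · exact (h.2 (isSome_evaln_mono hgt h'.1)).elim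

theorem exists_firstHaltsAt_iff {c : Code} : (∃ t, FirstHaltsAt c t) ↔ (c.eval 0).Dom := by
  constructor
  · rintro ⟨t, ht, -⟩
    obtain ⟨v, hv⟩ := Option.isSome_iff_exists.1 ht
    exact Part.dom_iff_mem.2 ⟨v, Code.evaln_sound hv⟩
  · intro hdom
    obtain ⟨v, hv⟩ := Part.dom_iff_mem.1 hdom
    obtain ⟨t, ht⟩ := Code.evaln_complete.1 hv
    have hzero : ¬ (c.evaln 0 0).isSome := by simp [Code.evaln]
    obtain ⟨s, hs, hs'⟩ := Nat.exists_not_and_succ_of_not_zero_of_exists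
      (p := fun t ↦ (c.evaln t 0).isSome) hzero ⟨t, Option.isSome_iff_exists.2 ⟨v, ht⟩⟩
    exact ⟨s, hs', hs⟩

theorem computablePred_firstHaltsAt :
    ComputablePred fun s : ℕ ↦ FirstHaltsAt (ofNat Code s.unpair.1) s.unpair.2 := by
  have hcode : Computable fun s : ℕ ↦ ofNat Code s.unpair.1 :=
    (Computable.ofNat Code).comp (Computable.fst.comp Computable.unpair)
  have htime : Computable fun s : ℕ ↦ s.unpair.2 := Computable.snd.comp Computable.unpair
  have hhalts {t : ℕ → ℕ} (ht : Computable t) :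
      ComputablePred fun s ↦ (((ofNat Code s.unpair.1).evaln (t s) 0).isSome : Prop) :=
    ComputablePred.computable_iff.2 ⟨_, Primrec.option_isSome.to_comp.comp
      (computable_evaln ht hcode (Computable.const 0)), rfl⟩
  exact computablePred_and (hhalts (Computable.succ.comp htime)) (hhalts htime).not

theorem exists_computable_injective_not_computablePred_range :
    ∃ k : ℕ → ℕ, Computable k ∧ Function.Injective k ∧ ¬ ComputablePred (· ∈ range k) := by
  let k (s : ℕ) : ℕ :=
    if FirstHaltsAt (ofNat Code s.unpair.1) s.unpair.2 then 2 * s.unpair.1 else 2 * s + 1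
  have hdouble {f : ℕ → ℕ} (hf : Computable f) : Computable fun s ↦ 2 * f s :=
    computable_nat_mul (Computable.const 2) hf
  have mem_range_iff (c : Code) : 2 * encode c ∈ range k ↔ (c.eval 0).Dom := by
    rw [← exists_firstHaltsAt_iff]
    constructor
    · rintro ⟨s, hs⟩
      by_cases h : FirstHaltsAt (ofNat Code s.unpair.1) s.unpair.2
      · have hcode : s.unpair.1 = encode c := by simp only [k, if_pos h] at hs; omega
        rw [hcode, ofNat_encode] at h
        exact ⟨_, h⟩
      · simp only [k, if_neg h] at hs
        omega
    · rintro ⟨t, ht⟩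
      exact ⟨Nat.pair (encode c) t, by simp [k, ht]⟩
  refine ⟨k, ?_, fun s t hst ↦ ?_, fun hrange ↦ ?_⟩
  · exact computable_ite computablePred_firstHaltsAt
      (hdouble (Computable.fst.comp Computable.unpair))
      (Computable.succ.comp (hdouble Computable.id))
  · by_cases hs : FirstHaltsAt (ofNat Code s.unpair.1) s.unpair.2 <;>
      by_cases ht : FirstHaltsAt (ofNat Code t.unpair.1) t.unpair.2 <;>
      simp only [k, hs, ht, if_true, if_false] at hst
    · have hfst : s.unpair.1 = t.unpair.1 := by omega
      rw [hfst] at hs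
      rw [← Nat.pair_unpair s, ← Nat.pair_unpair t, hfst, hs.unique ht]
    all_goals omega
  · refine ComputablePred.halting_problem 0 ?_
    exact (computablePred_comp hrange
      (computable_nat_mul (Computable.const 2) Computable.encode)).of_eq mem_range_iff

end Priority

section Existence

theorem isComputableReal_ratCast (q : ℚ) : IsComputableReal q :=
  ⟨fun _ ↦ q, Computable.const q, fun k ↦ by simp⟩

theorem dense_compl_of_forall_not_isComputableReal {P : Set ℝ}
    (hP : ∀ c ∈ P, ¬ IsComputableReal c) : Dense Pᶜ :=
  Rat.denseRange_cast.mono <| range_subset_iff.2 fun q hq ↦ hP _ hq (isComputableReal_ratCast q)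

theorem exists_pushedFan : ∃ D : PushedFan, D.slopes.Nonempty ∧
    (∀ c ∈ D.slopes, ¬ IsComputableReal c) ∧ ¬ ComputablePred (· ∈ range D.priority) := by
  obtain ⟨x, hx, hfar⟩ := exists_mem_Ioo_forall_diagRadius_lt
  obtain ⟨f, hf, hslope⟩ :=
    exists_computable_slope ratComputable_diagCenter ratComputable_diagRadius hx hfar
  obtain ⟨k, hk, hinj, hrange⟩ := exists_computable_injective_not_computablePred_range
  let D : PushedFan :=
    { slitCenter := diagCenter
      slitRadius := diagRadius
      slope := fun s ↦ (f s).1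
      margin := fun s ↦ (f s).2
      priority := k
      priority_injective := hinj
      abs_slitCenter_le := abs_diagCenter_le
      abs_slitRadius_le := abs_diagRadius_le
      margin_le_slope := fun s ↦ (hslope s).1
      slope_add_margin_le := fun s ↦ (hslope s).2.1
      slitRadius_add_margin_le := fun s ↦ (hslope s).2.2
      ratComputable_slitCenter := ratComputable_diagCenter
      ratComputable_slitRadius := ratComputable_diagRadius
      ratComputable_slope := RatComputable.ratCast (Computable.fst.comp hf)
      computable_margin := Computable.snd.comp hf
      computable_priority := hk }
  exact ⟨D, ⟨x, Ioo_subset_Icc_self hx, fun j ↦ (hfar j).le⟩,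
    fun c ↦ not_isComputableReal_of_mem_remainingSlopes, hrange⟩

end Existence

theorem exists_pi01_dendroid_without_computable_points :
    ∃ Q : Set (ℝ × ℝ), Q.Nonempty ∧ IsPi01Closed Q ∧ IsDendroid Q ∧
      ∀ x ∈ Q, ¬ IsComputablePoint x := by
  obtain ⟨D, hne, hslopes, hpriority⟩ := exists_pushedFan
  have hdendroid : IsDendroid D.carrier :=
    D.isDendroid_carrier hne (dense_compl_of_forall_not_isComputableReal hslopes)
  refine ⟨D.carrier, hdendroid.1.2.nonempty, D.isPi01Closed_carrier, hdendroid,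
    fun x hcarrier hx ↦ ?_⟩
  by_cases hapex : D.pushSystem.limitMap x = 0
  · exact hpriority (D.computablePred_mem_range_priority hx hapex)
  · obtain ⟨c, hc, hcomputable⟩ := D.exists_isComputableReal_mem_slopes hx hcarrier hne hapex
    exact hslopes c hc hcomputable
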